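/- arXiv:2510.05009 — 4 statements merged into one kernel-verified Lean document; each statement's English description precedes it below -/
import Mathlib

section
/- Let q ∈ {0,…,n−1}, let ω be an open set in ℝⁿ, and let u : ω → ℝ be a C²-smooth function. Then (a) u is real q-convex on ω if and only if for every point p ∈ ω the real Hessian matrix H_u(p) = (∂²u/∂x_k∂x_l (p))_{k,l=1..n} has at most q negative eigenvalues (counted with multiplicity); and (b) u is strictly real q-convex on ω if and only if for every point p ∈ ω the real Hessian H_u(p) has at most q nonpositive eigenvalues (counted with multiplicity). -/
open Metric Set Filter

noncomputable section

/-- An upper semicontinuous function `u : ω → [−∞,+∞)` (EReal-valued, never `⊤` on `ω`)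
is *real q-convex* on `ω` if it satisfies the local maximum property with respect to
affine linear functions on real `(q+1)`-dimensional affine subspaces. -/
def RealQConvexOn {E : Type*} [NormedAddCommGroup E] [NormedSpace ℝ E]
    (q : ℕ) (u : E → EReal) (ω : Set E) : Prop :=
  (∀ x ∈ ω, u x ≠ ⊤) ∧ UpperSemicontinuousOn u ω ∧
    ∀ P : AffineSubspace ℝ E, Module.finrank ℝ P.direction = q + 1 →
      ∀ (c : E) (r : ℝ), 0 < r → closure (Metric.ball c r) ⊆ ω →
        ∀ l : E →ᵃ[ℝ] ℝ,
          (∀ x ∈ Metric.sphere c r ∩ (P : Set E), u x ≤ (l x : EReal)) →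
          ∀ x ∈ Metric.closedBall c r ∩ (P : Set E), u x ≤ (l x : EReal)
/-- The real Hessian matrix `(∂²u/∂x_k∂x_l (p))` of `u` at `p`. -/
def hessianMatrix {n : ℕ} (u : EuclideanSpace ℝ (Fin n) → ℝ)
    (p : EuclideanSpace ℝ (Fin n)) : Matrix (Fin n) (Fin n) ℝ :=
  Matrix.of fun k l =>
    iteratedFDeriv ℝ 2 u p ![EuclideanSpace.single k 1, EuclideanSpace.single l 1]

/-- A real symmetric matrix has at most `q` negative eigenvalues (with multiplicity). -/
def NegEigAtMost {n : ℕ} (A : Matrix (Fin n) (Fin n) ℝ) (q : ℕ) : Prop :=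
  ∃ hA : A.IsHermitian, Nat.card {i // hA.eigenvalues i < 0} ≤ q

/-- A real symmetric matrix has at most `q` nonpositive eigenvalues (with multiplicity). -/
def NonposEigAtMost {n : ℕ} (A : Matrix (Fin n) (Fin n) ℝ) (q : ℕ) : Prop :=
  ∃ hA : A.IsHermitian, Nat.card {i // hA.eigenvalues i ≤ 0} ≤ q

/-- `u` is *strictly real q-convex* on `ω` if around every point `p ∈ ω` the perturbations
`x ↦ u(x) + ε‖x-p‖²` stay real q-convex for all sufficiently small `ε` (of either sign). -/
def StrictlyRealQConvexOn {E : Type*} [NormedAddCommGroup E] [NormedSpace ℝ E]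
    (q : ℕ) (u : E → ℝ) (ω : Set E) : Prop :=
  ∀ p ∈ ω, ∃ U, IsOpen U ∧ p ∈ U ∧ U ⊆ ω ∧ ∃ ε₀ : ℝ, 0 < ε₀ ∧
    ∀ ε : ℝ, -ε₀ < ε → ε < ε₀ →
      RealQConvexOn q (fun x => ((u x + ε * ‖x - p‖ ^ 2 : ℝ) : EReal)) U


section calculus
variable {E : Type*} [NormedAddCommGroup E] [NormedSpace ℝ E]

lemma line_hasDerivAt (u : E → ℝ) (y w : E) (t : ℝ) (hu : ContDiffAt ℝ 2 u (y + t • w)) :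
    HasDerivAt (fun s : ℝ => u (y + s • w)) (fderiv ℝ u (y + t • w) w) t := by
  have h1 : HasDerivAt (fun s : ℝ => y + s • w) w t := by
    simpa using ((hasDerivAt_id t).smul_const w).const_add y
  exact (hu.differentiableAt (by norm_num)).hasFDerivAt.comp_hasDerivAt t h1

lemma line_hasDerivAt2 (u : E → ℝ) (y w : E) (t : ℝ) (hu : ContDiffAt ℝ 2 u (y + t • w)) :
    HasDerivAt (fun s : ℝ => fderiv ℝ u (y + s • w) w)
      (fderiv ℝ (fderiv ℝ u) (y + t • w) w w) t := by
  have h1 : HasDerivAt (fun s : ℝ => y + s • w) w t := by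
    simpa using ((hasDerivAt_id t).smul_const w).const_add y
  have h2 : ContDiffAt ℝ 1 (fderiv ℝ u) (y + t • w) := hu.fderiv_right (by norm_num)
  have h3 := (h2.differentiableAt (by norm_num)).hasFDerivAt.comp_hasDerivAt t h1
  exact h3.clm_apply (hasDerivAt_const t w) |>.congr_deriv (by simp)

lemma localMax_hess (u : E → ℝ) (y w : E) (hu : ContDiffAt ℝ 2 u y) (a b c : ℝ)
    (h : IsLocalMax (fun t : ℝ => u (y + t • w) + (a + b * t + c * t ^ 2)) 0) :
    fderiv ℝ (fderiv ℝ u) y w w + 2 * c ≤ 0 := by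
  set g := fun t : ℝ => u (y + t • w) + (a + b * t + c * t ^ 2) with hg
  have hev : ∀ᶠ t : ℝ in nhds 0, ContDiffAt ℝ 2 u (y + t • w) := by
    have h1 := hu.eventually (by simp)
    have h2 : Tendsto (fun t : ℝ => y + t • w) (nhds 0) (nhds y) := by
      have : Continuous (fun t : ℝ => y + t • w) := by fun_prop
      simpa using this.tendsto 0
    exact h2.eventually h1
  have hd : ∀ᶠ t : ℝ in nhds 0, deriv g t = fderiv ℝ u (y + t • w) w + (b + 2 * c * t) := by
    filter_upwards [hev] with t ht
    refine HasDerivAt.deriv ((line_hasDerivAt u y w t ht).add ?_)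
    have := (((hasDerivAt_id t).const_mul b).const_add a).add ((hasDerivAt_pow 2 t).const_mul c)
    refine this.congr_deriv ?_
    simp; ring
  have hdd : deriv (deriv g) 0 = fderiv ℝ (fderiv ℝ u) y w w + 2 * c := by
    rw [EventuallyEq.deriv_eq (f := fun t => fderiv ℝ u (y + t • w) w + (b + 2 * c * t)) hd]
    have h1 := line_hasDerivAt2 u y w 0 (by simpa using hu)
    have h2 := ((hasDerivAt_id (0:ℝ)).const_mul (2 * c)).const_add b
    refine HasDerivAt.deriv ((h1.add h2).congr_deriv ?_)
    simp
  by_contra hc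
  push Not at hc
  rw [← hdd] at hc
  have hcont : ContinuousAt g 0 := by
    have h1 := (line_hasDerivAt u y w 0 (by simpa using hu)).continuousAt
    exact h1.add (by fun_prop)
  have hmin := isLocalMin_of_deriv_deriv_pos hc h.deriv_eq_zero hcont
  have hconst : g =ᶠ[nhds 0] fun _ => g 0 := by
    filter_upwards [h, hmin] with t h1 h2 using le_antisymm h1 h2
  have h5 : deriv (deriv g) 0 = 0 := by
    have := hconst.deriv.deriv_eq
    simpa using this
  linarith

lemma taylor_le (u : E → ℝ) (p w : E) (K : ℝ)
    (hu : ∀ t ∈ Icc (0:ℝ) 1, ContDiffAt ℝ 2 u (p + t • w))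
    (hK : ∀ t ∈ Icc (0:ℝ) 1, fderiv ℝ (fderiv ℝ u) (p + t • w) w w ≤ K) :
    u (p + w) ≤ u p + fderiv ℝ u p w + K / 2 := by
  have h1 : AntitoneOn (fun t : ℝ => fderiv ℝ u (p + t • w) w - K * t) (Icc 0 1) := by
    have hd : ∀ t ∈ Icc (0:ℝ) 1, HasDerivAt (fun t : ℝ => fderiv ℝ u (p + t • w) w - K * t)
        (fderiv ℝ (fderiv ℝ u) (p + t • w) w w - K) t := fun t ht => by
      exact ((line_hasDerivAt2 u p w t (hu t ht)).sub
        ((hasDerivAt_id t).const_mul K)).congr_deriv (by simp)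
    refine antitoneOn_of_hasDerivWithinAt_nonpos (convex_Icc 0 1)
      (fun t ht => (hd t ht).continuousAt.continuousWithinAt)
      (fun t ht => (hd t (interior_subset ht)).hasDerivWithinAt) ?_
    intro t ht
    linarith [hK t (interior_subset ht)]
  have h2 : AntitoneOn (fun t : ℝ => u (p + t • w) - (fderiv ℝ u p w * t + K / 2 * t ^ 2))
      (Icc 0 1) := by
    have hd : ∀ t ∈ Icc (0:ℝ) 1, HasDerivAt
        (fun t : ℝ => u (p + t • w) - (fderiv ℝ u p w * t + K / 2 * t ^ 2))
        (fderiv ℝ u (p + t • w) w - (fderiv ℝ u p w + K * t)) t := fun t ht => by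
      refine (line_hasDerivAt u p w t (hu t ht)).sub ?_
      refine (((hasDerivAt_id t).const_mul (fderiv ℝ u p w)).add
        ((hasDerivAt_pow 2 t).const_mul (K / 2))).congr_deriv ?_
      simp; ring
    refine antitoneOn_of_hasDerivWithinAt_nonpos (convex_Icc 0 1)
      (fun t ht => (hd t ht).continuousAt.continuousWithinAt)
      (fun t ht => (hd t (interior_subset ht)).hasDerivWithinAt) ?_
    intro t ht
    have ht' := interior_subset ht
    have := h1 (by simp) ht' ht'.1
    simp at this
    linarith
  have := h2 (a := 0) (b := 1) (by simp) (by simp) zero_le_one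
  simp at this
  linarith

lemma norm_close {F : Type*} [NormedAddCommGroup F] [NormedSpace ℝ F] (f : E → F) (p : E)
    (hf : ContDiffAt ℝ 0 f p) (c : ℝ) (hc : 0 < c) : ∀ᶠ x in nhds p, ‖f x - f p‖ < c := by
  have h := Metric.tendsto_nhds.1 hf.continuousAt c hc
  simpa [dist_eq_norm] using h

lemma hess_close (u : E → ℝ) (p : E) (hu : ContDiffAt ℝ 2 u p) (c : ℝ) (hc : 0 < c) :
    ∀ᶠ x in nhds p, ‖fderiv ℝ (fderiv ℝ u) x - fderiv ℝ (fderiv ℝ u) p‖ < c := by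
  have h2 : ContDiffAt ℝ 1 (fderiv ℝ u) p := hu.fderiv_right (by norm_num)
  have h3 : ContDiffAt ℝ 0 (fderiv ℝ (fderiv ℝ u)) p := h2.fderiv_right (by norm_num)
  exact norm_close _ p h3 c hc

end calculus

lemma hess_add_sq {E : Type*} [NormedAddCommGroup E] [InnerProductSpace ℝ E]
    (u : E → ℝ) (p x : E) (ε : ℝ) (hu : ContDiffAt ℝ 2 u x) (v w : E) :
    fderiv ℝ (fderiv ℝ (fun z => u z + ε * ‖z - p‖ ^ 2)) x v w =
      fderiv ℝ (fderiv ℝ u) x v w + 2 * ε * inner ℝ v w := by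
  have h1 : fderiv ℝ (fun z => u z + ε * ‖z - p‖ ^ 2) =ᶠ[nhds x]
      fun z => fderiv ℝ u z + (2 * ε) • innerSL ℝ (z - p) := by
    filter_upwards [hu.eventually (by simp)] with z hz
    have h2 : HasFDerivAt (fun z => ‖z - p‖ ^ 2) (2 • innerSL ℝ (z - p)) z := by
      simpa using ((hasFDerivAt_id z).sub_const p).norm_sq
    refine (((hz.differentiableAt (by norm_num)).hasFDerivAt.add
      (h2.const_mul ε)).congr_fderiv ?_).fderiv
    ext w; simp; ring
  rw [h1.fderiv_eq]
  have h3 : ContDiffAt ℝ 1 (fderiv ℝ u) x := hu.fderiv_right (by norm_num)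
  have h4 : HasFDerivAt (fun z => (2 * ε) • innerSL ℝ (z - p)) ((2 * ε) • innerSL ℝ) x := by
    have := (((innerSL ℝ (E := E)).hasFDerivAt (x := x - p)).comp x
      ((hasFDerivAt_id x).sub_const p)).const_smul (2 * ε)
    exact this.congr_fderiv (by ext; simp)
  rw [HasFDerivAt.fderiv (f := fun z => fderiv ℝ u z + (2 * ε) • innerSL ℝ (z - p)) ((h3.differentiableAt (by norm_num)).hasFDerivAt.add h4)]
  simp
  left
  rfl

section linalg
variable {n : ℕ}
local notation "𝔼" => EuclideanSpace ℝ (Fin n)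

lemma form_eq (B : 𝔼 →L[ℝ] 𝔼 →L[ℝ] ℝ) (A : Matrix (Fin n) (Fin n) ℝ)
    (hAB : ∀ k l, A k l = B (EuclideanSpace.single k 1) (EuclideanSpace.single l 1)) (v w : 𝔼) :
    B v w = ∑ k, v k * ∑ l, A k l * w l := by
  have h : ∀ v : 𝔼, v = ∑ k, v k • EuclideanSpace.single k (1:ℝ) := fun v => by
    simpa using ((EuclideanSpace.basisFun (Fin n) ℝ).sum_repr v).symm
  conv_lhs => rw [h v, h w]
  simp only [map_sum, map_smul, FunLike.coe_sum, Finset.sum_apply, FunLike.coe_smul,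
    Pi.smul_apply, smul_eq_mul, hAB, Finset.mul_sum]
  rw [Finset.sum_comm]
  refine Finset.sum_congr rfl fun k _ => Finset.sum_congr rfl fun l _ => ?_
  ring

lemma form_spectral (B : 𝔼 →L[ℝ] 𝔼 →L[ℝ] ℝ) (A : Matrix (Fin n) (Fin n) ℝ)
    (hAB : ∀ k l, A k l = B (EuclideanSpace.single k 1) (EuclideanSpace.single l 1))
    (hA : A.IsHermitian) (v : 𝔼) :
    B v v = ∑ i, hA.eigenvalues i * (inner ℝ (hA.eigenvectorBasis i) v) ^ 2 := by
  have h1 : ∀ i, B v (hA.eigenvectorBasis i) =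
      hA.eigenvalues i * inner ℝ (hA.eigenvectorBasis i) v := fun i => by
    rw [form_eq B A hAB]
    have h2 : ∀ k, ∑ l, A k l * hA.eigenvectorBasis i l =
        hA.eigenvalues i * hA.eigenvectorBasis i k := fun k => by
      have := congrFun (hA.mulVec_eigenvectorBasis i) k
      simpa [Matrix.mulVec, dotProduct] using this
    simp only [h2, PiLp.inner_apply, Finset.mul_sum]
    refine Finset.sum_congr rfl fun k _ => ?_
    simp; ring
  conv_lhs => rw [← hA.eigenvectorBasis.sum_repr' v]
  rw [map_sum]
  conv_lhs => rw [hA.eigenvectorBasis.sum_repr' v]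
  refine Finset.sum_congr rfl fun i _ => ?_
  rw [map_smul, h1, smul_eq_mul]; ring

lemma span_inner_zero (b : OrthonormalBasis (Fin n) ℝ 𝔼) (S : Finset (Fin n)) (v : 𝔼)
    (hv : v ∈ Submodule.span ℝ (b '' S)) (i : Fin n) (hi : i ∉ S) : inner ℝ (b i) v = 0 := by
  induction hv using Submodule.span_induction with
  | mem x hx =>
    obtain ⟨j, hj, rfl⟩ := hx
    rw [b.inner_eq_ite, if_neg]
    rintro rfl
    exact hi hj
  | zero => simp
  | add x y _ _ hx hy => rw [inner_add_right, hx, hy, add_zero]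
  | smul a x _ hx => rw [inner_smul_right, hx, mul_zero]

lemma span_finrank (b : OrthonormalBasis (Fin n) ℝ 𝔼) (S : Finset (Fin n)) :
    Module.finrank ℝ (Submodule.span ℝ (b '' S)) = S.card := by
  have h := b.orthonormal.linearIndependent.comp (fun i : S => (i : Fin n)) Subtype.val_injective
  have := finrank_span_eq_card h
  rw [Set.range_comp, Subtype.range_coe_subtype] at this
  simpa using this

lemma exists_lower (B : 𝔼 →L[ℝ] 𝔼 →L[ℝ] ℝ) (A : Matrix (Fin n) (Fin n) ℝ)
    (hAB : ∀ k l, A k l = B (EuclideanSpace.single k 1) (EuclideanSpace.single l 1))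
    (hA : A.IsHermitian) (S : Finset (Fin n)) (c : ℝ) (hS : ∀ i ∈ S, c ≤ hA.eigenvalues i) :
    ∃ W : Submodule ℝ 𝔼, Module.finrank ℝ W = S.card ∧ ∀ v ∈ W, c * ‖v‖ ^ 2 ≤ B v v := by
  refine ⟨_, span_finrank hA.eigenvectorBasis S, fun v hv => ?_⟩
  rw [form_spectral B A hAB hA, ← hA.eigenvectorBasis.sum_sq_inner_right, Finset.mul_sum]
  refine Finset.sum_le_sum fun i _ => ?_
  by_cases hi : i ∈ S
  · exact mul_le_mul_of_nonneg_right (hS i hi) (sq_nonneg _)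
  · rw [span_inner_zero _ S v hv i hi]; simp

lemma exists_upper (B : 𝔼 →L[ℝ] 𝔼 →L[ℝ] ℝ) (A : Matrix (Fin n) (Fin n) ℝ)
    (hAB : ∀ k l, A k l = B (EuclideanSpace.single k 1) (EuclideanSpace.single l 1))
    (hA : A.IsHermitian) (S : Finset (Fin n)) (c : ℝ) (hS : ∀ i ∈ S, hA.eigenvalues i ≤ c) :
    ∃ W : Submodule ℝ 𝔼, Module.finrank ℝ W = S.card ∧ ∀ v ∈ W, B v v ≤ c * ‖v‖ ^ 2 := by
  refine ⟨_, span_finrank hA.eigenvectorBasis S, fun v hv => ?_⟩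
  rw [form_spectral B A hAB hA, ← hA.eigenvectorBasis.sum_sq_inner_right, Finset.mul_sum]
  refine Finset.sum_le_sum fun i _ => ?_
  by_cases hi : i ∈ S
  · exact mul_le_mul_of_nonneg_right (hS i hi) (sq_nonneg _)
  · rw [span_inner_zero _ S v hv i hi]; simp

lemma exists_common (V W : Submodule ℝ 𝔼) (h : n < Module.finrank ℝ V + Module.finrank ℝ W) :
    ∃ v ∈ V, v ∈ W ∧ v ≠ 0 := by
  by_contra hc
  push Not at hc
  have hd : Disjoint V W := by
    rw [Submodule.disjoint_def]
    exact hc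
  have := Submodule.finrank_add_finrank_le_of_disjoint hd
  simp at this
  omega

lemma exists_pos_lower (f : Fin n → ℝ) (S : Finset (Fin n)) (h : ∀ i ∈ S, 0 < f i) :
    ∃ c > 0, ∀ i ∈ S, c ≤ f i := by
  rcases S.eq_empty_or_nonempty with rfl | hS
  · exact ⟨1, one_pos, by simp⟩
  · obtain ⟨i, hi, hm⟩ := S.exists_min_image f hS
    exact ⟨f i, h i hi, hm⟩

/-- positivity on a subspace of dimension `n - q` implies few negative eigenvalues -/
lemma neg_of_not (B : 𝔼 →L[ℝ] 𝔼 →L[ℝ] ℝ) (A : Matrix (Fin n) (Fin n) ℝ)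
    (hAB : ∀ k l, A k l = B (EuclideanSpace.single k 1) (EuclideanSpace.single l 1))
    (hA : A.IsHermitian) (q : ℕ)
    (h : ¬ ∃ V : Submodule ℝ 𝔼, Module.finrank ℝ V = q + 1 ∧ ∃ c > 0,
      ∀ v ∈ V, B v v ≤ - c * ‖v‖ ^ 2) : NegEigAtMost A q := by
  refine ⟨hA, ?_⟩
  by_contra hc
  push Not at hc
  rw [Nat.card_eq_fintype_card, Fintype.card_subtype] at hc
  obtain ⟨S, hS, hcard⟩ := Finset.exists_subset_card_eq (Nat.succ_le_of_lt hc)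
  obtain ⟨c, hc0, hcS⟩ := exists_pos_lower (fun i => - hA.eigenvalues i) S (fun i hi => by
    simpa using hS hi)
  obtain ⟨W, hW, hWB⟩ := exists_upper B A hAB hA S (-c) (fun i hi => by linarith [hcS i hi])
  exact h ⟨W, by rw [hW, hcard], c, hc0, hWB⟩

lemma nonpos_of_not (B : 𝔼 →L[ℝ] 𝔼 →L[ℝ] ℝ) (A : Matrix (Fin n) (Fin n) ℝ)
    (hAB : ∀ k l, A k l = B (EuclideanSpace.single k 1) (EuclideanSpace.single l 1))
    (hA : A.IsHermitian) (q : ℕ)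
    (h : ¬ ∃ V : Submodule ℝ 𝔼, Module.finrank ℝ V = q + 1 ∧
      ∀ v ∈ V, B v v ≤ 0) : NonposEigAtMost A q := by
  refine ⟨hA, ?_⟩
  by_contra hc
  push Not at hc
  rw [Nat.card_eq_fintype_card, Fintype.card_subtype] at hc
  obtain ⟨S, hS, hcard⟩ := Finset.exists_subset_card_eq (Nat.succ_le_of_lt hc)
  obtain ⟨W, hW, hWB⟩ := exists_upper B A hAB hA S 0 (fun i hi => by simpa using hS hi)
  exact h ⟨W, by rw [hW, hcard], by simpa using hWB⟩

lemma exists_of_neg (B : 𝔼 →L[ℝ] 𝔼 →L[ℝ] ℝ) (A : Matrix (Fin n) (Fin n) ℝ)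
    (hAB : ∀ k l, A k l = B (EuclideanSpace.single k 1) (EuclideanSpace.single l 1))
    (q : ℕ) (h : NegEigAtMost A q) :
    ∃ W : Submodule ℝ 𝔼, n ≤ Module.finrank ℝ W + q ∧ ∀ v ∈ W, 0 ≤ B v v := by
  obtain ⟨hA, h⟩ := h
  rw [Nat.card_eq_fintype_card, Fintype.card_subtype] at h
  obtain ⟨W, hW, hWB⟩ := exists_lower B A hAB hA
    (Finset.univ.filter fun i => ¬ hA.eigenvalues i < 0) 0 (by simp)
  refine ⟨W, ?_, by simpa using hWB⟩
  have := Finset.card_filter_add_card_filter_not (s := Finset.univ) (fun i => hA.eigenvalues i < 0)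
  simp only [Finset.card_univ, Fintype.card_fin] at this
  omega

lemma exists_of_nonpos (B : 𝔼 →L[ℝ] 𝔼 →L[ℝ] ℝ) (A : Matrix (Fin n) (Fin n) ℝ)
    (hAB : ∀ k l, A k l = B (EuclideanSpace.single k 1) (EuclideanSpace.single l 1))
    (q : ℕ) (h : NonposEigAtMost A q) :
    ∃ W : Submodule ℝ 𝔼, n ≤ Module.finrank ℝ W + q ∧ ∃ c > 0, ∀ v ∈ W, c * ‖v‖ ^ 2 ≤ B v v := by
  obtain ⟨hA, h⟩ := h
  rw [Nat.card_eq_fintype_card, Fintype.card_subtype] at h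
  obtain ⟨c, hc0, hcS⟩ := exists_pos_lower hA.eigenvalues
    (Finset.univ.filter fun i => ¬ hA.eigenvalues i ≤ 0) (by simp)
  obtain ⟨W, hW, hWB⟩ := exists_lower B A hAB hA
    (Finset.univ.filter fun i => ¬ hA.eigenvalues i ≤ 0) c hcS
  refine ⟨W, ?_, c, hc0, hWB⟩
  have := Finset.card_filter_add_card_filter_not (s := Finset.univ) (fun i => hA.eigenvalues i ≤ 0)
  simp only [Finset.card_univ, Fintype.card_fin] at this
  omega

lemma hessianMatrix_apply (u : 𝔼 → ℝ) (p : 𝔼) (k l : Fin n) : hessianMatrix u p k l =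
    fderiv ℝ (fderiv ℝ u) p (EuclideanSpace.single k 1) (EuclideanSpace.single l 1) := by
  simp [hessianMatrix, iteratedFDeriv_two_apply]

lemma hessianMatrix_isHermitian (u : 𝔼 → ℝ) (p : 𝔼) (hu : ContDiffAt ℝ 2 u p) :
    (hessianMatrix u p).IsHermitian := by
  ext k l
  simp only [Matrix.conjTranspose_apply, hessianMatrix_apply, star_trivial]
  exact hu.isSymmSndFDerivAt (by simp) _ _

end linalg

section main
variable {n : ℕ}
local notation "𝔼" => EuclideanSpace ℝ (Fin n)

lemma qconvex_imp {q : ℕ} (ω : Set 𝔼) (hω : IsOpen ω) (u : 𝔼 → ℝ) (hu : ContDiffOn ℝ 2 u ω)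
    (h : RealQConvexOn q (fun x => (u x : EReal)) ω) (p : 𝔼) (hp : p ∈ ω) :
    NegEigAtMost (hessianMatrix u p) q := by
  have hat : ∀ x ∈ ω, ContDiffAt ℝ 2 u x := fun x hx => hu.contDiffAt (hω.mem_nhds hx)
  refine neg_of_not (fderiv ℝ (fderiv ℝ u) p) _ (hessianMatrix_apply u p)
    (hessianMatrix_isHermitian u p (hat p hp)) q ?_
  rintro ⟨V, hV, c, hc, hVB⟩
  have hev : ∀ᶠ x in nhds p, x ∈ ω ∧ ‖fderiv ℝ (fderiv ℝ u) x - fderiv ℝ (fderiv ℝ u) p‖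
      < c / 2 := by
    have h6 := hess_close u p (hat p hp) (c / 2) (half_pos hc)
    filter_upwards [hω.mem_nhds hp, h6] with x hx1 hx2 using ⟨hx1, hx2⟩
  obtain ⟨ρ, hρ, hball⟩ := Metric.eventually_nhds_iff_ball.1 hev
  set r := ρ / 2 with hr
  have hr0 : 0 < r := by positivity
  have hcb : closedBall p r ⊆ ball p ρ := closedBall_subset_ball (by linarith)
  set L : 𝔼 →ᵃ[ℝ] ℝ := (fderiv ℝ u p).toLinearMap.toAffineMap +
    AffineMap.const ℝ 𝔼 (u p - fderiv ℝ u p p - c / 4 * r ^ 2) with hL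
  have hLx : ∀ x, L x = u p + fderiv ℝ u p (x - p) - c / 4 * r ^ 2 := fun x => by
    simp [hL]; ring
  have key := h.2.2 (AffineSubspace.mk' p V) (by rw [AffineSubspace.direction_mk', hV]) p r hr0
    (fun x hx => (hball x (hcb (closure_ball_subset_closedBall hx))).1) L ?_ p
    ⟨by simp [hr0.le], by simp⟩
  · rw [EReal.coe_le_coe_iff, hLx] at key
    simp at key
    have : 0 < c / 4 * r ^ 2 := by positivity
    linarith
  · rintro x ⟨hx, hxV⟩
    rw [EReal.coe_le_coe_iff, hLx]
    have hxV' : x - p ∈ V := by simpa using hxV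
    have hnorm : ‖x - p‖ = r := by simpa [dist_eq_norm] using hx
    have hseg : ∀ t ∈ Icc (0:ℝ) 1, p + t • (x - p) ∈ ball p ρ := fun t ht => by
      apply hcb
      simp only [mem_closedBall, dist_eq_norm, add_sub_cancel_left, norm_smul, hnorm,
        Real.norm_eq_abs, abs_of_nonneg ht.1]
      nlinarith [ht.2]
    have := taylor_le u p (x - p) (-(c / 2) * r ^ 2) (fun t ht => hat _ (hball _ (hseg t ht)).1) ?_
    · rw [add_sub_cancel] at this
      linarith
    · intro t ht
      have h1 := (hball _ (hseg t ht)).2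
      have h2 := (fderiv ℝ (fderiv ℝ u) (p + t • (x - p)) -
        fderiv ℝ (fderiv ℝ u) p).le_opNorm₂ (x - p) (x - p)
      have h3 := le_trans (le_abs_self _) h2
      have h4 := hVB _ hxV'
      rw [hnorm] at h3 h4
      simp only [FunLike.coe_sub, Pi.sub_apply] at h3
      nlinarith [mul_le_mul_of_nonneg_right h1.le (sq_nonneg r)]

lemma qconvex_of {q : ℕ} (ω : Set 𝔼) (hω : IsOpen ω) (u : 𝔼 → ℝ) (hu : ContDiffOn ℝ 2 u ω)
    (h : ∀ p ∈ ω, NegEigAtMost (hessianMatrix u p) q) :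
    RealQConvexOn q (fun x => (u x : EReal)) ω := by
  have hat : ∀ x ∈ ω, ContDiffAt ℝ 2 u x := fun x hx => hu.contDiffAt (hω.mem_nhds hx)
  refine ⟨fun x _ => EReal.coe_ne_top _, ?_, ?_⟩
  · exact (continuous_coe_real_ereal.comp_continuousOn hu.continuousOn).upperSemicontinuousOn
  intro P hP c r hr hball l hl x₀ hx₀
  rw [closure_ball c hr.ne'] at hball
  rw [EReal.coe_le_coe_iff]
  by_contra hlt
  push Not at hlt
  set δ := (u x₀ - l x₀) / (2 * r ^ 2) with hδ
  have hδ0 : 0 < δ := div_pos (by linarith) (by positivity)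
  have hδr : δ * r ^ 2 = (u x₀ - l x₀) / 2 := by rw [hδ]; field_simp
  set v : 𝔼 → ℝ := fun x => u x - l x + δ * ‖x - c‖ ^ 2 with hv
  have hlc : Continuous l := l.continuous_of_finiteDimensional
  have hvc : ContinuousOn v (closedBall c r ∩ P) := by
    refine ContinuousOn.add (ContinuousOn.sub (hu.continuousOn.mono ?_) hlc.continuousOn) ?_
    · exact inter_subset_left.trans hball
    · fun_prop
  have hK : IsCompact (closedBall c r ∩ (P : Set 𝔼)) :=
    (isCompact_closedBall c r).inter_right P.closed_of_finiteDimensional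
  obtain ⟨y, hy, hmax⟩ := hK.exists_isMaxOn ⟨x₀, hx₀⟩ hvc
  have hy1 : v x₀ ≤ v y := hmax hx₀
  have hyb : y ∈ ball c r := by
    by_contra hyb
    have hys : y ∈ sphere c r := by
      rw [← closedBall_sdiff_ball]; exact ⟨hy.1, hyb⟩
    have h1 := hl y ⟨hys, hy.2⟩
    rw [EReal.coe_le_coe_iff] at h1
    have h2 : ‖y - c‖ = r := by simpa [dist_eq_norm] using hys
    have h3 : 0 ≤ δ * ‖x₀ - c‖ ^ 2 := by positivity
    simp only [hv, h2, hδr] at hy1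
    linarith
  have hyω : y ∈ ω := hball hy.1
  obtain ⟨W, hW, hWB⟩ := exists_of_neg (fderiv ℝ (fderiv ℝ u) y) _ (hessianMatrix_apply u y) q
    (h y hyω)
  obtain ⟨w, hwP, hwW, hw0⟩ := exists_common P.direction W (by omega)
  have h1 := hWB w hwW
  have h2 := localMax_hess u y w (hat y hyω) (- l y + δ * ‖y - c‖ ^ 2)
    (- l.linear w + 2 * δ * inner ℝ (y - c) w) (δ * ‖w‖ ^ 2) ?_
  · have : 0 < δ * ‖w‖ ^ 2 := by positivity
    linarith
  · have heq : (fun t : ℝ => u (y + t • w) + (- l y + δ * ‖y - c‖ ^ 2 +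
        (- l.linear w + 2 * δ * inner ℝ (y - c) w) * t + (δ * ‖w‖ ^ 2) * t ^ 2)) =
        fun t => v (y + t • w) := by
      ext t
      have e1 : l (y + t • w) = l y + t * l.linear w := by
        have := l.map_vadd y (t • w)
        simp only [vadd_eq_add, map_smul, smul_eq_mul] at this
        rw [add_comm y, this]; ring
      have e2 : ‖y + t • w - c‖ ^ 2 = ‖y - c‖ ^ 2 + 2 * (t * inner ℝ (y - c) w)
          + t ^ 2 * ‖w‖ ^ 2 := by
        rw [show y + t • w - c = (y - c) + t • w by abel, norm_add_sq_real, inner_smul_right,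
          norm_smul, mul_pow, Real.norm_eq_abs, sq_abs]
      simp only [hv, e1, e2]; ring
    rw [heq]
    have hcont : Continuous (fun t : ℝ => y + t • w) := by fun_prop
    have hmem : ∀ᶠ t : ℝ in nhds 0, y + t • w ∈ ball c r :=
      hcont.continuousAt.eventually (isOpen_ball.mem_nhds (by simpa using hyb))
    filter_upwards [hmem] with t ht
    have hP' : y + t • w ∈ P := by
      rw [add_comm]
      exact AffineSubspace.vadd_mem_of_mem_direction (P.direction.smul_mem t hwP) hy.2
    have := hmax ⟨ball_subset_closedBall ht, hP'⟩
    simpa using this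

lemma contDiffOn_add_sq (U : Set 𝔼) (u : 𝔼 → ℝ) (hu : ContDiffOn ℝ 2 u U) (p : 𝔼) (ε : ℝ) :
    ContDiffOn ℝ 2 (fun x => u x + ε * ‖x - p‖ ^ 2) U := by
  refine hu.add (ContDiff.contDiffOn ?_)
  exact contDiff_const.mul ((contDiff_id.sub contDiff_const).norm_sq ℝ)

lemma strict_imp {q : ℕ} (ω : Set 𝔼) (hω : IsOpen ω) (u : 𝔼 → ℝ) (hu : ContDiffOn ℝ 2 u ω)
    (h : StrictlyRealQConvexOn q u ω) (p : 𝔼) (hp : p ∈ ω) :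
    NonposEigAtMost (hessianMatrix u p) q := by
  have hat : ContDiffAt ℝ 2 u p := hu.contDiffAt (hω.mem_nhds hp)
  refine nonpos_of_not (fderiv ℝ (fderiv ℝ u) p) _ (hessianMatrix_apply u p)
    (hessianMatrix_isHermitian u p hat) q ?_
  rintro ⟨V, hV, hVB⟩
  obtain ⟨U, hU, hpU, hUω, ε₀, hε, hconv⟩ := h p hp
  have h1 := qconvex_imp U hU _ (contDiffOn_add_sq U u (hu.mono hUω) p (-(ε₀ / 2)))
    (hconv (-(ε₀ / 2)) (by linarith) (by linarith)) p hpU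
  obtain ⟨W, hW, hWB⟩ := exists_of_neg _ _ (hessianMatrix_apply _ p) q h1
  have hn : n < Module.finrank ℝ V + Module.finrank ℝ W := by omega
  obtain ⟨w, hwV, hwW, hw0⟩ := exists_common V W hn
  have h2 := hWB w hwW
  rw [hess_add_sq u p p _ hat, real_inner_self_eq_norm_sq] at h2
  have h3 := hVB w hwV
  have : 0 < ε₀ * ‖w‖ ^ 2 := by positivity
  linarith

lemma strict_of {q : ℕ} (ω : Set 𝔼) (hω : IsOpen ω) (u : 𝔼 → ℝ) (hu : ContDiffOn ℝ 2 u ω)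
    (h : ∀ p ∈ ω, NonposEigAtMost (hessianMatrix u p) q) :
    StrictlyRealQConvexOn q u ω := by
  intro p hp
  have hat : ∀ x ∈ ω, ContDiffAt ℝ 2 u x := fun x hx => hu.contDiffAt (hω.mem_nhds hx)
  obtain ⟨W, hW, c, hc, hWB⟩ := exists_of_nonpos _ _ (hessianMatrix_apply u p) q (h p hp)
  have hev : ∀ᶠ x in nhds p, x ∈ ω ∧ ‖fderiv ℝ (fderiv ℝ u) x - fderiv ℝ (fderiv ℝ u) p‖
      < c / 2 := by
    have h6 := hess_close u p (hat p hp) (c / 2) (half_pos hc)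
    filter_upwards [hω.mem_nhds hp, h6] with x hx1 hx2 using ⟨hx1, hx2⟩
  obtain ⟨ρ, hρ, hball⟩ := Metric.eventually_nhds_iff_ball.1 hev
  have hsub : ball p ρ ⊆ ω := fun x hx => (hball x hx).1
  refine ⟨ball p ρ, isOpen_ball, mem_ball_self hρ, hsub, c / 4, by positivity, ?_⟩
  intro ε hε1 hε2
  have hC := contDiffOn_add_sq (ball p ρ) u (hu.mono hsub) p ε
  refine qconvex_of _ isOpen_ball _ hC ?_
  intro x hx
  refine neg_of_not _ _ (hessianMatrix_apply _ x)
    (hessianMatrix_isHermitian _ x (hC.contDiffAt (isOpen_ball.mem_nhds hx))) q ?_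
  rintro ⟨V, hV, d, hd, hVB⟩
  have hn : n < Module.finrank ℝ V + Module.finrank ℝ W := by omega
  obtain ⟨w, hwV, hwW, hw0⟩ := exists_common V W hn
  have h0 := hVB w hwV
  rw [hess_add_sq u p x _ (hat x (hsub hx)), real_inner_self_eq_norm_sq] at h0
  have h1 := (hball x hx).2
  have h2 := (fderiv ℝ (fderiv ℝ u) x - fderiv ℝ (fderiv ℝ u) p).le_opNorm₂ w w
  have h3 := le_trans (neg_abs_le _ |> fun h => neg_le.1 h) h2
  have h4 := hWB w hwW
  simp only [FunLike.coe_sub, Pi.sub_apply] at h3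
  have hw2 : 0 < ‖w‖ ^ 2 := by positivity
  have h5 := mul_le_mul_of_nonneg_right h1.le hw2.le
  have h6 := mul_lt_mul_of_pos_right hε1 hw2
  have h7 : 0 < d * ‖w‖ ^ 2 := by positivity
  nlinarith

end main

/-- A C²-smooth function on an open set `ω ⊆ ℝⁿ` is (strictly) real q-convex iff its real
Hessian has at most `q` negative (resp. nonpositive) eigenvalues at every point of `ω`. -/
theorem contDiffOn_realQConvexOn_iff_hessian {n q : ℕ} (hq : q < n)
    (ω : Set (EuclideanSpace ℝ (Fin n))) (hω : IsOpen ω)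
    (u : EuclideanSpace ℝ (Fin n) → ℝ) (hu : ContDiffOn ℝ 2 u ω) :
    (RealQConvexOn q (fun x => (u x : EReal)) ω ↔
        ∀ p ∈ ω, NegEigAtMost (hessianMatrix u p) q) ∧
    (StrictlyRealQConvexOn q u ω ↔
        ∀ p ∈ ω, NonposEigAtMost (hessianMatrix u p) q) := by
  exact ⟨⟨fun h p hp => qconvex_imp ω hω u hu h p hp, qconvex_of ω hω u hu⟩,
    ⟨fun h p hp => strict_imp ω hω u hu h p hp, strict_of ω hω u hu⟩⟩
end
end

section
/- Let q ∈ {0,…,n−1}, let ω be an open set in ℝⁿ, and let u : ω → [−∞,+∞) be upper semicontinuous. Then: (a) if u is real q-convex on ω and u is twice differentiable at a point p ∈ ω, then the real Hessian matrix of u at p has at most q negative eigenvalues (counted with multiplicity); (b) if u ∈ C¹_L(ω) for some L ≥ 0 and the real Hessian of u (which exists almost everywhere) has at most q negative eigenvalues at almost every point of ω, then u is real q-convex on ω. -/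
open Metric Set Filter

noncomputable section

/-- `g ∈ C¹_L(ω)`: the function `x ↦ g(x) + (L/2)‖x‖²` is locally convex on `ω`
(functions with lower bounded Hessian). -/
def MemC1L {E : Type*} [NormedAddCommGroup E] [NormedSpace ℝ E]
    (L : ℝ) (g : E → ℝ) (ω : Set E) : Prop :=
  ∀ x ∈ ω, ∃ U, IsOpen U ∧ x ∈ U ∧ U ⊆ ω ∧ Convex ℝ U ∧
    ConvexOn ℝ U fun y => g y + L / 2 * ‖y‖ ^ 2

/-- The supremum convolution `(u ∗ g)(x) = sup_y u(y)·g(x−y)` of two nonnegative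
functions defined on all of the space. -/
def supConv {E : Type*} [NormedAddCommGroup E] (u g : E → ℝ) (x : E) : ℝ :=
  ⨆ y : E, u y * g (x - y)
/-- `f` is twice differentiable at `p` (in the Peano sense) with derivative `l` and
(symmetric) second derivative `Q`: second-order Taylor expansion of order `o(‖h‖²)`. -/
def HasSecondOrderExpansionAt {n : ℕ} (f : EuclideanSpace ℝ (Fin n) → ℝ)
    (p : EuclideanSpace ℝ (Fin n)) (l : EuclideanSpace ℝ (Fin n) →L[ℝ] ℝ)
    (Q : EuclideanSpace ℝ (Fin n) →L[ℝ] EuclideanSpace ℝ (Fin n) →L[ℝ] ℝ) : Prop :=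
  (fun h => f (p + h) - f p - l h - (1 / 2 : ℝ) * Q h h) =o[nhds 0] fun h => ‖h‖ ^ 2

/-- The matrix of a continuous bilinear form in the standard basis of `ℝⁿ`. -/
def bilinMatrix {n : ℕ}
    (Q : EuclideanSpace ℝ (Fin n) →L[ℝ] EuclideanSpace ℝ (Fin n) →L[ℝ] ℝ) :
    Matrix (Fin n) (Fin n) ℝ :=
  Matrix.of fun k l => Q (EuclideanSpace.single k 1) (EuclideanSpace.single l 1)


lemma bilin_eq {n : ℕ}
    (Q : EuclideanSpace ℝ (Fin n) →L[ℝ] EuclideanSpace ℝ (Fin n) →L[ℝ] ℝ)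
    (hA : (bilinMatrix Q).IsHermitian) (v : EuclideanSpace ℝ (Fin n)) :
    Q v v = ∑ i, hA.eigenvalues i * (hA.eigenvectorBasis.repr v i) ^ 2 := by
  set b := hA.eigenvectorBasis
  have key : ∀ x y : EuclideanSpace ℝ (Fin n),
      Q x y = x.ofLp ⬝ᵥ ((bilinMatrix Q).mulVec y.ofLp) := by
    intro x y
    have hx := (EuclideanSpace.basisFun (Fin n) ℝ).sum_repr x
    have hy := (EuclideanSpace.basisFun (Fin n) ℝ).sum_repr y
    conv_lhs => rw [← hx, ← hy]
    simp only [EuclideanSpace.basisFun_repr, EuclideanSpace.basisFun_apply, map_sum, map_smul,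
      sum_apply, smul_apply, dotProduct, Matrix.mulVec,
      bilinMatrix, Matrix.of_apply, smul_eq_mul, Finset.mul_sum]
    rw [Finset.sum_comm]
    refine Finset.sum_congr rfl fun i _ => Finset.sum_congr rfl fun j _ => by ring
  have hb : ∀ x i, Q x (b i) = hA.eigenvalues i * inner ℝ (b i) x := by
    intro x i
    rw [key, hA.mulVec_eigenvectorBasis]
    simp [dotProduct, PiLp.inner_apply, Finset.mul_sum, b]
    refine Finset.sum_congr rfl fun j _ => by ring
  have h1 : Q v v = Q v (∑ i, b.repr v i • b i) := by rw [b.sum_repr v]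
  rw [h1, map_sum]
  simp only [map_smul, hb, smul_eq_mul, b.repr_apply_apply]
  refine Finset.sum_congr rfl fun j _ => by ring

lemma exists_nonneg_of_negEig {n q : ℕ}
    (Q : EuclideanSpace ℝ (Fin n) →L[ℝ] EuclideanSpace ℝ (Fin n) →L[ℝ] ℝ)
    (h : NegEigAtMost (bilinMatrix Q) q) (V : Submodule ℝ (EuclideanSpace ℝ (Fin n)))
    (hV : Module.finrank ℝ V = q + 1) : ∃ v ∈ V, v ≠ 0 ∧ 0 ≤ Q v v := by
  obtain ⟨hA, hc⟩ := h
  let T : V →ₗ[ℝ] ({i // hA.eigenvalues i < 0} → ℝ) :=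
    { toFun := fun v i => hA.eigenvectorBasis.repr v i.1
      map_add' := by intro x y; ext; simp
      map_smul' := by intro x y; ext; simp }
  have hni : LinearMap.ker T ≠ ⊥ := by
    apply LinearMap.ker_ne_bot_of_finrank_lt
    rw [hV, Module.finrank_fintype_fun_eq_card, ← Nat.card_eq_fintype_card]
    omega
  obtain ⟨v, hv, hv0⟩ := Submodule.exists_mem_ne_zero_of_ne_bot hni
  refine ⟨v, v.2, by simpa using hv0, ?_⟩
  rw [bilin_eq Q hA]
  refine Finset.sum_nonneg fun i _ => ?_
  by_cases hi : hA.eigenvalues i < 0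
  · have : hA.eigenvectorBasis.repr v i = 0 := congrFun (LinearMap.mem_ker.1 hv) ⟨i, hi⟩
    simp [this]
  · exact mul_nonneg (not_lt.1 hi) (sq_nonneg _)

lemma exists_neg_of_not_negEig {n q : ℕ}
    (Q : EuclideanSpace ℝ (Fin n) →L[ℝ] EuclideanSpace ℝ (Fin n) →L[ℝ] ℝ)
    (hQ : ∀ v w, Q v w = Q w v)
    (h : ¬ NegEigAtMost (bilinMatrix Q) q) :
    ∃ V : Submodule ℝ (EuclideanSpace ℝ (Fin n)), Module.finrank ℝ V = q + 1 ∧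
      ∃ ε > 0, ∀ v ∈ V, Q v v ≤ - ε * ‖v‖ ^ 2 := by
  have hA : (bilinMatrix Q).IsHermitian := by
    ext i j; simp [bilinMatrix, hQ]
  have hc : q + 1 ≤ Fintype.card {i // hA.eigenvalues i < 0} := by
    by_contra hc
    exact h ⟨hA, by rw [Nat.card_eq_fintype_card]; omega⟩
  obtain ⟨s, hs⟩ := Finset.exists_subset_card_eq (s := Finset.univ.filter
    (fun i => hA.eigenvalues i < 0)) (n := q + 1) (by rwa [Fintype.card_subtype] at hc)
  obtain ⟨hs, hcard⟩ := hs
  have hneg : ∀ i ∈ s, hA.eigenvalues i < 0 := fun i hi => by simpa using hs hi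
  have hsne : s.Nonempty := by rw [← Finset.card_pos]; omega
  obtain ⟨i0, hi0, hmax⟩ := s.exists_max_image hA.eigenvalues hsne
  set b := hA.eigenvectorBasis
  refine ⟨Submodule.span ℝ (Set.range fun i : s => b i), ?_, -hA.eigenvalues i0,
    by linarith [hneg i0 hi0], ?_⟩
  · rw [finrank_span_eq_card]
    · simpa using hcard
    · exact b.orthonormal.linearIndependent.comp _ Subtype.val_injective
  · intro v hv
    have h0 : ∀ j ∉ s, b.repr v j = 0 := by
      intro j hj
      induction hv using Submodule.span_induction with
      | mem x hx =>
        obtain ⟨i, rfl⟩ := hx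
        have : (i : Fin n) ≠ j := fun h => hj (h ▸ i.2)
        simp [this.symm]
      | zero => simp
      | add x y _ _ hx hy => simp [hx, hy]
      | smul a x _ hx => simp [hx]
    rw [bilin_eq Q hA, ← b.repr.norm_map v, EuclideanSpace.norm_sq_eq, Finset.mul_sum]
    refine Finset.sum_le_sum fun i _ => ?_
    by_cases hi : i ∈ s
    · have := hmax i hi
      simp only [neg_neg, Real.norm_eq_abs, sq_abs]
      exact mul_le_mul_of_nonneg_right this (sq_nonneg _)
    · simp [h0 i hi, b]

lemma partA {n q : ℕ} (ω : Set (EuclideanSpace ℝ (Fin n))) (hω : IsOpen ω)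
    (u : EuclideanSpace ℝ (Fin n) → EReal) (hu : RealQConvexOn q u ω)
    (p : EuclideanSpace ℝ (Fin n)) (hp : p ∈ ω) (f : EuclideanSpace ℝ (Fin n) → ℝ)
    (hf : ∀ᶠ x in nhds p, u x = (f x : EReal))
    (l : EuclideanSpace ℝ (Fin n) →L[ℝ] ℝ)
    (Q : EuclideanSpace ℝ (Fin n) →L[ℝ] EuclideanSpace ℝ (Fin n) →L[ℝ] ℝ)
    (hQ : ∀ v w, Q v w = Q w v) (hexp : HasSecondOrderExpansionAt f p l Q) :
    NegEigAtMost (bilinMatrix Q) q := by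
  by_contra hcon
  obtain ⟨V, hV, ε, hε, hneg⟩ := exists_neg_of_not_negEig Q hQ hcon
  have h1 := hexp.def (show (0:ℝ) < ε / 8 by positivity)
  obtain ⟨r1, hr1, h1⟩ := Metric.eventually_nhds_iff.1 h1
  obtain ⟨r2, hr2, h2⟩ := Metric.eventually_nhds_iff.1 (hf.and (hω.mem_nhds hp))
  set r := min r1 r2 / 2 with hr
  have hr0 : 0 < r := by positivity
  have hrr1 : r < r1 := by
    have := min_le_left r1 r2
    have : 0 < min r1 r2 := by positivity
    linarith
  have hrr2 : r < r2 := by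
    have := min_le_right r1 r2
    have : 0 < min r1 r2 := by positivity
    linarith
  let l' : EuclideanSpace ℝ (Fin n) →ᵃ[ℝ] ℝ := (l : EuclideanSpace ℝ (Fin n) →ₗ[ℝ] ℝ).toAffineMap
    + AffineMap.const ℝ _ (f p - l p - 3 / 8 * ε * r ^ 2)
  have hl' : ∀ x, l' x = l x + (f p - l p - 3 / 8 * ε * r ^ 2) := fun x => rfl
  have := hu.2.2 (AffineSubspace.mk' p V) (by rw [AffineSubspace.direction_mk']; exact hV) p r hr0
    (fun x hx => by
      rw [closure_ball _ hr0.ne'] at hx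
      exact (h2 (lt_of_le_of_lt (mem_closedBall.1 hx) hrr2)).2) l' ?_ p
    ⟨by simp [hr0.le], AffineSubspace.self_mem_mk' _ _⟩
  · rw [(h2 (by simpa using hr2)).1, EReal.coe_le_coe_iff, hl'] at this
    have : 0 < ε * r ^ 2 := by positivity
    linarith
  · rintro x ⟨hx, hxV⟩
    have hxV : x - p ∈ V := by simpa [AffineSubspace.mem_mk'] using hxV
    have hd : dist x p = r := hx
    rw [(h2 (by rw [hd]; exact hrr2)).1, EReal.coe_le_coe_iff, hl']
    have hn : ‖x - p‖ = r := by rw [← dist_eq_norm]; exact hd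
    have h3 := h1 (y := x - p) (by rw [dist_zero_right, hn]; exact hrr1)
    have h4 := hneg _ hxV
    simp only [add_sub_cancel, Real.norm_eq_abs, hn, map_sub, abs_of_pos (pow_pos hr0 2)] at h3 h4
    have h5 := (abs_le.1 h3).2
    linarith

section Jensen

variable {E : Type*} [NormedAddCommGroup E] [InnerProductSpace ℝ E]

open Topology

lemma semiconvex_lower (g : E → ℝ) (B : Set E) (M : ℝ)
    (hf : ConvexOn ℝ B fun y => g y + M / 2 * ‖y‖ ^ 2) (y p : E) (hy : y ∈ interior B)
    (hmax : ∀ w ∈ B, g w ≤ g y + inner ℝ p (w - y)) (w : E) (hw : w ∈ B) :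
    g y + inner ℝ p (w - y) - M / 2 * ‖w - y‖ ^ 2 ≤ g w := by
  set e := w - y with he
  have hwe : w = y + e := by simp [he]
  have hcont : Tendsto (fun s : ℝ => y - s • e) (𝓝[>] 0) (𝓝 y) := by
    have : Continuous fun s : ℝ => y - s • e := by fun_prop
    have h := (this.tendsto 0).mono_left (nhdsWithin_le_nhds (s := Ioi 0))
    simpa using h
  have hev : ∀ᶠ s : ℝ in 𝓝[>] 0, y - s • e ∈ B :=
    hcont (mem_interior_iff_mem_nhds.1 hy)
  have hlim : Tendsto (fun s : ℝ => g y + inner ℝ p e - M / 2 * ((1 + s) * ‖e‖ ^ 2)) (𝓝[>] 0)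
      (𝓝 (g y + inner ℝ p e - M / 2 * ‖e‖ ^ 2)) := by
    have : Continuous fun s : ℝ => g y + inner ℝ p e - M / 2 * ((1 + s) * ‖e‖ ^ 2) := by fun_prop
    have h := (this.tendsto 0).mono_left (nhdsWithin_le_nhds (s := Ioi 0))
    simpa using h
  refine le_of_tendsto hlim ?_
  filter_upwards [hev, self_mem_nhdsWithin] with s hs hs0
  have hs0 : 0 < s := hs0
  have h1 := hf.2 hs hw (show (0:ℝ) ≤ 1 / (1 + s) by positivity)
    (show (0:ℝ) ≤ s / (1 + s) by positivity) (by field_simp)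
  have h2 : (1 / (1 + s)) • (y - s • e) + (s / (1 + s)) • w = y := by
    rw [hwe, smul_sub, smul_add, smul_smul]
    have : (1 / (1 + s)) * s = s / (1 + s) := by ring
    rw [this]
    have h3 : (1 / (1 + s)) • y + (s / (1 + s)) • y = y := by
      rw [← add_smul]
      have : (1 / (1 + s)) + (s / (1 + s)) = 1 := by field_simp
      rw [this, one_smul]
    calc _ = (1 / (1 + s)) • y + (s / (1 + s)) • y := by abel
      _ = y := h3
  rw [h2] at h1
  have h3 := hmax _ hs
  have h4 : y - s • e - y = -(s • e) := by abel
  rw [h4, inner_neg_right, inner_smul_right] at h3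
  have n1 : ‖y - s • e‖ ^ 2 = ‖y‖ ^ 2 - 2 * s * inner ℝ y e + s ^ 2 * ‖e‖ ^ 2 := by
    rw [norm_sub_sq_real, inner_smul_right, norm_smul, Real.norm_eq_abs, mul_pow, sq_abs]; ring
  have n2 : ‖w‖ ^ 2 = ‖y‖ ^ 2 + 2 * inner ℝ y e + ‖e‖ ^ 2 := by
    rw [hwe, norm_add_sq_real]
  simp only [smul_eq_mul] at h1
  rw [n1, n2] at h1
  have h5 : (1 + s) * (g y + M / 2 * ‖y‖ ^ 2) ≤
      (g (y - s • e) + M / 2 * (‖y‖ ^ 2 - 2 * s * inner ℝ y e + s ^ 2 * ‖e‖ ^ 2)) +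
      s * (g w + M / 2 * (‖y‖ ^ 2 + 2 * inner ℝ y e + ‖e‖ ^ 2)) := by
    have := mul_le_mul_of_nonneg_left h1 (show 0 ≤ 1 + s by positivity)
    refine this.trans (le_of_eq ?_)
    field_simp
  have h6 : s * (g y + inner ℝ p e - M / 2 * ((1 + s) * ‖e‖ ^ 2)) ≤ s * g w := by
    nlinarith
  exact le_of_mul_le_mul_left h6 hs0

lemma grad_lip (g : E → ℝ) (x0 : E) (r C : ℝ) (hr : 0 < r) (hC : 0 ≤ C) (y z p p' : E)
    (hy : y ∈ closedBall x0 (r / 2)) (hz : z ∈ closedBall x0 (r / 2))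
    (h1 : ∀ w ∈ closedBall x0 r, |g w - g y - inner ℝ p (w - y)| ≤ C * ‖w - y‖ ^ 2)
    (h2 : ∀ w ∈ closedBall x0 r, |g w - g z - inner ℝ p' (w - z)| ≤ C * ‖w - z‖ ^ 2) :
    ‖p - p'‖ ≤ 7 * C * ‖y - z‖ := by
  have key : ∀ τ, 0 < τ → τ ≤ r / 2 → ‖y - z‖ ≤ 2 * τ → ‖p - p'‖ ≤ 14 * C * τ := by
    intro τ hτ hτr hd
    rcases eq_or_ne p p' with rfl | hne
    · simp; positivity
    have hpp : 0 < ‖p - p'‖ := norm_pos_iff.2 (sub_ne_zero.2 hne)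
    set e := (τ / ‖p - p'‖) • (p - p') with he
    have hen : ‖e‖ = τ := by
      rw [he, norm_smul, Real.norm_eq_abs, abs_of_pos (by positivity)]; field_simp
    have hei : inner ℝ p e - inner ℝ p' e = τ * ‖p - p'‖ := by
      rw [← inner_sub_left, he, inner_smul_right, real_inner_self_eq_norm_sq]; field_simp
    have hze : z + e ∈ closedBall x0 r := by
      rw [mem_closedBall, dist_eq_norm] at hz ⊢
      calc ‖z + e - x0‖ = ‖(z - x0) + e‖ := by congr 1; abel
        _ ≤ ‖z - x0‖ + ‖e‖ := norm_add_le _ _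
        _ ≤ r := by linarith
    have hz' : z ∈ closedBall x0 r := closedBall_subset_closedBall (by linarith) hz
    have hyz : ‖z - y‖ ≤ 2 * τ := by rwa [norm_sub_rev]
    have a1 := h1 _ hze
    have a2 := h1 _ hz'
    have a3 := h2 _ hze
    have e1 : z + e - y = (z - y) + e := by abel
    have b1 : ‖z + e - y‖ ^ 2 ≤ (3 * τ) ^ 2 := by
      apply pow_le_pow_left₀ (norm_nonneg _)
      rw [e1]
      linarith [norm_add_le (z - y) e]
    have b2 : ‖z - y‖ ^ 2 ≤ (2 * τ) ^ 2 := pow_le_pow_left₀ (norm_nonneg _) hyz 2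
    have c1 := mul_le_mul_of_nonneg_left b1 hC
    have c2 := mul_le_mul_of_nonneg_left b2 hC
    rw [add_sub_cancel_left, hen] at a3
    rw [e1, inner_add_right] at a1
    rw [e1] at c1
    have d1 := abs_le.1 (a1.trans c1)
    have d2 := abs_le.1 (a2.trans c2)
    have d3 := abs_le.1 a3
    have : τ * ‖p - p'‖ ≤ τ * (14 * C * τ) := by
      rw [← hei]; nlinarith [d1.1, d2.2, d3.2, d1.2, d2.1, d3.1]
    exact le_of_mul_le_mul_left this hτ
  rcases eq_or_ne y z with rfl | hne
  · have hlim : Tendsto (fun τ : ℝ => 14 * C * τ) (𝓝[>] 0) (𝓝 0) := by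
      have : Continuous fun τ : ℝ => 14 * C * τ := by fun_prop
      have h := (this.tendsto 0).mono_left (nhdsWithin_le_nhds (s := Ioi 0))
      simpa using h
    have : ‖p - p'‖ ≤ 0 := by
      refine ge_of_tendsto hlim ?_
      filter_upwards [Ioc_mem_nhdsGT (show 0 < r / 2 by positivity)] with τ hτ
      exact key τ hτ.1 hτ.2 (by simpa using hτ.1.le)
    simpa using this
  · have hd : 0 < ‖y - z‖ := norm_pos_iff.2 (sub_ne_zero.2 hne)
    have hle : ‖y - z‖ ≤ r := by
      rw [← dist_eq_norm]
      linarith [dist_triangle_right y z x0, mem_closedBall.1 hy, mem_closedBall.1 hz]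
    have := key (‖y - z‖ / 2) (by positivity) (by linarith) (by linarith)
    linarith

lemma step_est (g : E → ℝ) (x p z w z' P : E) (A : E →L[ℝ] E) (C s : ℝ) (hC : 0 ≤ C) (hs : 0 ≤ s)
    (h1 : |g w - g z' - inner ℝ P (w - z')| ≤ C * ‖w - z'‖ ^ 2)
    (h2 : |g z - g z' - inner ℝ P (z - z')| ≤ C * ‖z - z'‖ ^ 2)
    (hz : ‖z - z'‖ ≤ s) (hw : ‖w - z‖ ≤ s) (hP : ‖P - p - A (z' - x)‖ ≤ s) :
    |g w - g z - inner ℝ (p + A (z - x)) (w - z)| ≤ (5 * C + 1 + ‖A‖) * s ^ 2 := by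
  have b1 : ‖w - z'‖ ^ 2 ≤ (2 * s) ^ 2 := by
    apply pow_le_pow_left₀ (norm_nonneg _)
    have : w - z' = (w - z) + (z - z') := by abel
    rw [this]
    linarith [norm_add_le (w - z) (z - z')]
  have b2 : ‖z - z'‖ ^ 2 ≤ s ^ 2 := pow_le_pow_left₀ (norm_nonneg _) hz 2
  have c1 := mul_le_mul_of_nonneg_left b1 hC
  have c2 := mul_le_mul_of_nonneg_left b2 hC
  have b3 : ‖P - (p + A (z - x))‖ ≤ (1 + ‖A‖) * s := by
    have : P - (p + A (z - x)) = (P - p - A (z' - x)) - A (z - z') := by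
      have : A (z - x) = A (z' - x) + A (z - z') := by rw [← map_add]; congr 1; abel
      rw [this]; abel
    rw [this]
    refine (norm_sub_le _ _).trans ?_
    have := (A.le_opNorm (z - z')).trans (mul_le_mul_of_nonneg_left hz (norm_nonneg A))
    linarith
  have b4 : |inner ℝ (P - (p + A (z - x))) (w - z)| ≤ (1 + ‖A‖) * s * s :=
    (abs_real_inner_le_norm _ _).trans (mul_le_mul b3 hw (norm_nonneg _) (by positivity))
  have e1 : (inner ℝ P (w - z') : ℝ) = inner ℝ P (w - z) + inner ℝ P (z - z') := by
    rw [← inner_add_right]; congr 1; abel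
  rw [inner_sub_left] at b4
  rw [e1] at h1
  have d1 := abs_le.1 (h1.trans c1)
  have d2 := abs_le.1 (h2.trans c2)
  have d4 := abs_le.1 b4
  rw [abs_le]
  constructor <;> nlinarith [d1.1, d1.2, d2.1, d2.2, d4.1, d4.2]

lemma chain_est (g : E → ℝ) (x p h : E) (A : E →L[ℝ] E) (D : ℝ) (N : ℕ) (hN : 0 < N)
    (hstep : ∀ i < N, |g (x + ((i + 1 : ℝ) / N) • h) - g (x + ((i : ℝ) / N) • h)
      - inner ℝ (p + A (((i : ℝ) / N) • h)) ((1 / N : ℝ) • h)| ≤ D * (‖h‖ / N) ^ 2) :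
    |g (x + h) - g x - inner ℝ p h - 1 / 2 * inner ℝ (A h) h| ≤
      (D + ‖A‖) / N * ‖h‖ ^ 2 := by
  have hN' : (0 : ℝ) < N := by exact_mod_cast hN
  have ind : ∀ i : ℕ, i ≤ N → |g (x + ((i : ℝ) / N) • h) - g x - (i / N) * inner ℝ p h
      - (i * (i - 1)) / (2 * N ^ 2) * inner ℝ (A h) h| ≤ i * (D * (‖h‖ / N) ^ 2) := by
    intro i
    induction i with
    | zero => intro _; simp
    | succ i ih =>
      intro hi
      have h1 := abs_le.1 (ih (by omega))
      have h2 := hstep i (by omega)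
      have e : (inner ℝ (p + A (((i : ℝ) / N) • h)) ((1 / N : ℝ) • h) : ℝ) =
          1 / N * inner ℝ p h + i / N ^ 2 * inner ℝ (A h) h := by
        rw [map_smul, inner_smul_right, inner_add_left, inner_smul_left]
        simp only [conj_trivial]
        field_simp
      rw [e] at h2
      have h2 := abs_le.1 h2
      push_cast
      have e1 : ((i : ℝ) + 1) / N * inner ℝ p h = i / N * inner ℝ p h + 1 / N * inner ℝ p h := by
        ring
      have e2 : ((i : ℝ) + 1) * (i + 1 - 1) / (2 * N ^ 2) * inner ℝ (A h) h =
          i * (i - 1) / (2 * N ^ 2) * inner ℝ (A h) h + i / N ^ 2 * inner ℝ (A h) h := by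
        field_simp; ring
      rw [e1, e2, abs_le]
      constructor <;> linarith [h1.1, h1.2, h2.1, h2.2]
  have h1 := ind N le_rfl
  rw [div_self hN'.ne', one_smul, one_mul] at h1
  have e1 : (N * (N - 1) : ℝ) / (2 * N ^ 2) * inner ℝ (A h) h =
    1 / 2 * inner ℝ (A h) h - 1 / (2 * N) * inner ℝ (A h) h := by field_simp
  have e2 : (N : ℝ) * (D * (‖h‖ / N) ^ 2) = D / N * ‖h‖ ^ 2 := by field_simp
  rw [e1, e2] at h1
  have h2 : |1 / (2 * N) * (inner ℝ (A h) h : ℝ)| ≤ ‖A‖ / N * ‖h‖ ^ 2 := by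
    rw [abs_mul, abs_of_pos (show (0 : ℝ) < 1 / (2 * N) by positivity)]
    have h3 : |(inner ℝ (A h) h : ℝ)| ≤ ‖A‖ * ‖h‖ * ‖h‖ :=
      (abs_real_inner_le_norm _ _).trans
        (mul_le_mul_of_nonneg_right (A.le_opNorm h) (norm_nonneg _))
    calc 1 / (2 * N) * |(inner ℝ (A h) h : ℝ)| ≤ 1 / N * (‖A‖ * ‖h‖ * ‖h‖) := by
          apply mul_le_mul _ h3 (abs_nonneg _) (by positivity)
          apply one_div_le_one_div_of_le hN'; linarith
      _ = _ := by ring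
  have h1 := abs_le.1 h1
  have h2 := abs_le.1 h2
  rw [add_div, add_mul, abs_le]
  constructor <;> linarith [h1.1, h1.2, h2.1, h2.2]

open MeasureTheory Pointwise in
lemma density_net [FiniteDimensional ℝ E] [MeasurableSpace E] [BorelSpace E] (μ : Measure E)
    [μ.IsAddHaarMeasure] (K : Set E) (x : E)
    (h : Tendsto (fun r => μ (K ∩ closedBall x r) / μ (closedBall x r)) (𝓝[>] 0) (𝓝 1))
    (ε : ℝ) (hε : 0 < ε) :
    ∀ᶠ t : ℝ in 𝓝[>] 0, ∀ v : E, ‖v‖ ≤ t → ∃ z ∈ K, ‖x + v - z‖ ≤ ε * t := by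
  obtain ⟨T, hTf, hcov⟩ := Metric.totallyBounded_iff.1
    (isCompact_closedBall (0 : E) 1).totallyBounded (ε / 2) (by positivity)
  have hev : ∀ᶠ t : ℝ in 𝓝[>] 0, ∀ c ∈ T, (K ∩ ({x} + t • closedBall c (ε / 2))).Nonempty := by
    rw [Filter.eventually_all_finite hTf]
    intro c _
    exact Measure.eventually_nonempty_inter_smul_of_density_one μ K x h _
      measurableSet_closedBall (measure_closedBall_pos μ c (by positivity)).ne'
  filter_upwards [hev, self_mem_nhdsWithin] with t ht ht0 v hv
  have ht0 : 0 < t := ht0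
  have hv1 : t⁻¹ • v ∈ closedBall (0 : E) 1 := by
    rw [mem_closedBall_zero_iff, norm_smul, norm_inv, Real.norm_eq_abs, abs_of_pos ht0]
    rw [inv_mul_le_iff₀ ht0]; simpa using hv
  obtain ⟨c, hc, hvc⟩ := mem_iUnion₂.1 (hcov hv1)
  obtain ⟨z, hzK, hz⟩ := ht c hc
  refine ⟨z, hzK, ?_⟩
  obtain ⟨x', hx', y, hy, rfl⟩ := hz
  obtain ⟨w, hw, rfl⟩ := hy
  rw [mem_singleton_iff] at hx'
  subst hx'
  have e : x' + v - (x' + t • w) = t • ((t⁻¹ • v - c) - (w - c)) := by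
    rw [smul_sub, smul_sub, smul_sub, smul_inv_smul₀ ht0.ne']; abel
  change ‖x' + v - (x' + t • w)‖ ≤ _
  rw [e, norm_smul, Real.norm_eq_abs, abs_of_pos ht0, mul_comm]
  apply mul_le_mul_of_nonneg_right _ ht0.le
  rw [mem_ball, dist_eq_norm] at hvc
  rw [mem_closedBall, dist_eq_norm] at hw
  linarith [norm_sub_le (t⁻¹ • v - c) (w - c)]

lemma expand (g : E → ℝ) (K : Set E) (G : E → E) (A : E →L[ℝ] E) (x : E)
    (r C : ℝ) (hr : 0 < r) (hC : 0 ≤ C)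
    (hG : ∀ y ∈ K, ∀ w ∈ closedBall x r, |g w - g y - inner ℝ (G y) (w - y)| ≤ C * ‖w - y‖ ^ 2)
    (hA : HasFDerivWithinAt G A K x)
    (hden : ∀ ε > 0, ∀ᶠ t : ℝ in 𝓝[>] 0, ∀ v : E, ‖v‖ ≤ t → ∃ z ∈ K, ‖x + v - z‖ ≤ ε * t) :
    (fun h => g (x + h) - g x - inner ℝ (G x) h - (1 / 2 : ℝ) * inner ℝ (A h) h)
      =o[nhds 0] fun h => ‖h‖ ^ 2 := by
  rw [Asymptotics.isLittleO_iff]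
  intro c hc
  set D := 5 * C + 1 + ‖A‖ with hD
  have hD0 : 0 < D := by positivity
  obtain ⟨N, hN⟩ := exists_nat_gt ((D + ‖A‖) / c)
  have hNpos : (0 : ℝ) < N := lt_of_le_of_lt (by positivity) hN
  have hN0 : 0 < N := by exact_mod_cast hNpos
  have hN1 : (1 : ℝ) ≤ N := by exact_mod_cast hN0
  have hNinv : (1 : ℝ) / N ≤ 1 := by rw [div_le_one hNpos]; exact hN1
  have hDN : (D + ‖A‖) / N ≤ c := by
    rw [div_lt_iff₀ hc] at hN
    rw [div_le_iff₀ hNpos]; linarith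
  have hder := (hasFDerivWithinAt_iff_isLittleO.1 hA).def (show (0 : ℝ) < 1 / (2 * N) by positivity)
  rw [eventually_nhdsWithin_iff, Metric.eventually_nhds_iff] at hder
  obtain ⟨r1, hr1, hder⟩ := hder
  have hev := hden (1 / N) (by positivity)
  rw [eventually_nhdsWithin_iff, Metric.eventually_nhds_iff] at hev
  obtain ⟨r2, hr2, hev⟩ := hev
  rw [Metric.eventually_nhds_iff]
  refine ⟨min r (min (r1 / 2) r2), by positivity, fun h hh => ?_⟩
  rw [dist_zero_right, lt_min_iff, lt_min_iff] at hh
  obtain ⟨hh1, hh2, hh3⟩ := hh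
  rcases eq_or_ne h 0 with rfl | hne
  · simp
  have ht : 0 < ‖h‖ := norm_pos_iff.2 hne
  have hnet := hev (y := ‖h‖) (by simpa using hh3) ht
  rw [Real.norm_eq_abs, Real.norm_eq_abs, abs_of_nonneg (sq_nonneg ‖h‖)]
  refine (chain_est g x (G x) h A D N hN0 ?_).trans
    (mul_le_mul_of_nonneg_right hDN (sq_nonneg _))
  intro i hi
  have hi' : (i : ℝ) + 1 ≤ N := by exact_mod_cast hi
  have hmem : ∀ a : ℝ, 0 ≤ a → a ≤ 1 → ‖a • h‖ ≤ ‖h‖ := by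
    intro a h0 h1
    rw [norm_smul, Real.norm_eq_abs, abs_of_nonneg h0]
    exact mul_le_of_le_one_left ht.le h1
  have hmem' : ∀ a : ℝ, 0 ≤ a → a ≤ 1 → x + a • h ∈ closedBall x r := by
    intro a h0 h1
    rw [mem_closedBall, dist_eq_norm, add_sub_cancel_left]
    exact (hmem a h0 h1).trans hh1.le
  have hi0 : 0 ≤ (i : ℝ) / N := by positivity
  have hi1 : (i : ℝ) / N ≤ 1 := by rw [div_le_one hNpos]; linarith
  obtain ⟨z', hz'K, hz'⟩ := hnet _ (hmem _ hi0 hi1)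
  have hx : x + ((i : ℝ) / N) • h - x = ((i : ℝ) / N) • h := by abel
  have hzx : ‖z' - x‖ ≤ 2 * ‖h‖ := by
    have e : z' - x = ((i : ℝ) / N) • h - (x + ((i : ℝ) / N) • h - z') := by abel
    rw [e]
    have h1 := norm_sub_le (((i : ℝ) / N) • h) (x + ((i : ℝ) / N) • h - z')
    have h2 := hmem _ hi0 hi1
    have h3 : 1 / N * ‖h‖ ≤ ‖h‖ := mul_le_of_le_one_left ht.le hNinv
    linarith
  have hdiff : x + (((i : ℝ) + 1) / N) • h - (x + ((i : ℝ) / N) • h) = (1 / N : ℝ) • h := by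
    rw [add_sub_add_left_eq_sub, ← sub_smul]; congr 1; ring
  have := step_est g x (G x) (x + ((i : ℝ) / N) • h) (x + (((i : ℝ) + 1) / N) • h) z' (G z') A C
    (‖h‖ / N) hC (by positivity)
    (hG z' hz'K _ (hmem' _ (by positivity) (by rw [div_le_one hNpos]; exact hi')))
    (hG z' hz'K _ (hmem' _ hi0 hi1))
    (hz'.trans (le_of_eq (by ring)))
    (by rw [hdiff, norm_smul, Real.norm_eq_abs, abs_of_pos (by positivity : (0:ℝ) < 1 / N)]
        exact le_of_eq (by ring))
    (by
      have := hder (y := z') (by rw [dist_eq_norm]; linarith) hz'K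
      refine this.trans ?_
      calc 1 / (2 * N) * ‖z' - x‖ ≤ 1 / (2 * N) * (2 * ‖h‖) :=
            mul_le_mul_of_nonneg_left hzx (by positivity)
        _ = ‖h‖ / N := by field_simp)
  rwa [hdiff, hx] at this

open MeasureTheory in
lemma jensen [FiniteDimensional ℝ E] [MeasurableSpace E] [BorelSpace E] (μ : Measure E)
    [μ.IsAddHaarMeasure] (g : E → ℝ) (x0 : E) (r M η : ℝ) (hr : 0 < r) (hM : 0 ≤ M) (hη : 0 < η)
    (hcont : ContinuousOn g (closedBall x0 r))
    (hconv : ConvexOn ℝ (closedBall x0 r) fun y => g y + M / 2 * ‖y‖ ^ 2)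
    (hmax : ∀ w ∈ closedBall x0 r, g w ≤ g x0 - η * ‖w - x0‖ ^ 2)
    (S : Set E) (hS : μ S = 0) :
    ∃ y ∈ ball x0 r, y ∉ S ∧ ∃ (p : E) (A : E →L[ℝ] E),
      (∀ w ∈ closedBall x0 r, g w ≤ g y + inner ℝ p (w - y)) ∧
      (fun h => g (y + h) - g y - inner ℝ p h - (1 / 2 : ℝ) * inner ℝ (A h) h)
      =o[nhds 0] fun h => ‖h‖ ^ 2 := by
  -- touching points
  have hex : ∀ p ∈ ball (0 : E) (η * r / 2), ∃ y ∈ closedBall x0 (r / 2),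
      ∀ w ∈ closedBall x0 r, g w ≤ g y + inner ℝ p (w - y) := by
    intro p hp
    rw [mem_ball_zero_iff] at hp
    obtain ⟨y, hy, hymax⟩ := (isCompact_closedBall x0 r).exists_isMaxOn
      ⟨x0, mem_closedBall_self hr.le⟩
      (f := fun w => g w - inner ℝ p w) (hcont.sub (by fun_prop))
    refine ⟨y, ?_, fun w hw => ?_⟩
    · have h1 : g x0 - inner ℝ p x0 ≤ g y - inner ℝ p y := hymax (mem_closedBall_self hr.le)
      have h2 := hmax y hy
      have h3 : (inner ℝ p y : ℝ) - inner ℝ p x0 = inner ℝ p (y - x0) := by rw [inner_sub_right]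
      have h4 := (abs_le.1 (abs_real_inner_le_norm p (y - x0))).1
      rw [mem_closedBall, dist_eq_norm]
      by_contra hlt
      push Not at hlt
      have h5 : η * ‖y - x0‖ ^ 2 ≤ ‖p‖ * ‖y - x0‖ := by linarith
      have h6 : 0 < ‖y - x0‖ := by linarith
      have h7 : η * ‖y - x0‖ ≤ ‖p‖ := by
        apply le_of_mul_le_mul_right _ h6
        linarith
      nlinarith
    · have : g w - inner ℝ p w ≤ g y - inner ℝ p y := hymax hw
      rw [inner_sub_right]; linarith
  set K : Set E := {y | y ∈ closedBall x0 (r / 2) ∧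
    ∃ p : E, ∀ w ∈ closedBall x0 r, g w ≤ g y + inner ℝ p (w - y)} with hK
  have hGex : ∀ y, ∃ p : E, y ∈ K → ∀ w ∈ closedBall x0 r, g w ≤ g y + inner ℝ p (w - y) := by
    intro y
    by_cases hy : y ∈ K
    · obtain ⟨p, hp⟩ := hy.2
      exact ⟨p, fun _ => hp⟩
    · exact ⟨0, fun h => absurd h hy⟩
  choose G hG using hGex
  have htouch : ∀ y ∈ closedBall x0 (r / 2), ∀ p : E,
      (∀ w ∈ closedBall x0 r, g w ≤ g y + inner ℝ p (w - y)) →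
      ∀ w ∈ closedBall x0 r, |g w - g y - inner ℝ p (w - y)| ≤ M / 2 * ‖w - y‖ ^ 2 := by
    intro y hy p hp w hw
    have h1 := semiconvex_lower g _ M hconv y p
      (ball_subset_interior_closedBall (closedBall_subset_ball (by linarith) hy)) hp w hw
    have h2 := hp w hw
    have h3 : 0 ≤ M / 2 * ‖w - y‖ ^ 2 := by positivity
    rw [abs_le]; constructor <;> linarith
  have hlip : LipschitzOnWith (Real.toNNReal (7 * (M / 2))) G K := by
    apply LipschitzOnWith.of_dist_le_mul
    intro y hy z hz
    rw [dist_eq_norm, dist_eq_norm, Real.coe_toNNReal _ (by positivity)]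
    exact grad_lip g x0 r (M / 2) hr (by positivity) y z _ _ hy.1 hz.1
      (htouch y hy.1 _ (hG y hy)) (htouch z hz.1 _ (hG z hz))
  have himg : ball (0 : E) (η * r / 2) ⊆ G '' K := by
    intro p hp
    obtain ⟨y, hy, hyp⟩ := hex p hp
    have hyK : y ∈ K := ⟨hy, p, hyp⟩
    refine ⟨y, hyK, ?_⟩
    have := grad_lip g x0 r (M / 2) hr (by positivity) y y _ _ hy hy
      (htouch y hy _ (hG y hyK)) (htouch y hy _ hyp)
    simp only [sub_self, norm_zero, mul_zero] at this
    exact sub_eq_zero.1 (norm_le_zero_iff.1 this)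
  have hKpos : μ K ≠ 0 := by
    intro h0
    have h1 : μH[Module.finrank ℝ E] K = 0 :=
      Measure.absolutelyContinuous_isAddHaarMeasure (μH[Module.finrank ℝ E]) μ h0
    have h2 := hlip.hausdorffMeasure_image_le (d := Module.finrank ℝ E) (by positivity)
    rw [h1, mul_zero] at h2
    have h3 : μH[Module.finrank ℝ E] (ball (0 : E) (η * r / 2)) = 0 :=
      le_antisymm ((measure_mono himg).trans h2) zero_le
    exact (measure_ball_pos (μH[Module.finrank ℝ E]) (0 : E) (by positivity)).ne' h3
  have hdiff := hlip.ae_differentiableWithinAt_of_mem (μ := μ)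
  have hdens := Besicovitch.ae_tendsto_measure_inter_div μ K
  rw [ae_iff] at hdiff hdens
  have hdens' := le_antisymm ((Measure.le_restrict_apply K _).trans hdens.le) zero_le
  obtain ⟨y, hyK, hyN⟩ : ∃ y ∈ K, y ∉ S ∪ ({a | ¬ (a ∈ K → DifferentiableWithinAt ℝ G K a)} ∪
    ({a | ¬ Tendsto (fun r => μ (K ∩ closedBall a r) / μ (closedBall a r)) (𝓝[>] 0) (𝓝 1)}
      ∩ K)) := by
    by_contra hcon
    exact hKpos (measure_mono_null (fun y hy => by_contra fun h => hcon ⟨y, hy, h⟩)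
      (measure_union_null hS (measure_union_null hdiff hdens')))
  simp only [mem_union, mem_inter_iff, mem_ofPred_eq, not_or, not_not, not_and] at hyN
  obtain ⟨hyS, hyd, hyt⟩ := hyN
  have hyt : Tendsto (fun r => μ (K ∩ closedBall y r) / μ (closedBall y r)) (𝓝[>] 0) (𝓝 1) := by
    by_contra h
    exact hyt h hyK
  refine ⟨y, closedBall_subset_ball (by linarith) hyK.1, hyS, G y, fderivWithin ℝ G K y,
    hG y hyK, ?_⟩
  refine expand g K G _ y (r / 2) (M / 2) (by positivity) (by positivity) ?_
    (hyd hyK).hasFDerivWithinAt (fun ε hε => density_net μ K y hyt ε hε)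
  intro z hz w hw
  refine htouch z hz.1 _ (hG z hz) w ?_
  rw [mem_closedBall] at hw ⊢
  linarith [dist_triangle w y x0, mem_closedBall.1 hyK.1]

end Jensen

lemma convexOn_of_support {E : Type*} [NormedAddCommGroup E] [NormedSpace ℝ E] (ψ : E → ℝ)
    (D : E → E →L[ℝ] ℝ) (h : ∀ y w, ψ y + D y (w - y) ≤ ψ w) : ConvexOn ℝ univ ψ := by
  refine ⟨convex_univ, fun y _ z _ a b ha hb hab => ?_⟩
  set w := a • y + b • z with hw
  have h1 := mul_le_mul_of_nonneg_left (h w y) ha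
  have h2 := mul_le_mul_of_nonneg_left (h w z) hb
  have h3 : a * D w (y - w) + b * D w (z - w) = 0 := by
    rw [← smul_eq_mul, ← smul_eq_mul, ← map_smul, ← map_smul, ← map_add]
    have : a • (y - w) + b • (z - w) = 0 := by
      rw [smul_sub, smul_sub]
      have : a • w + b • w = w := by rw [← add_smul, hab, one_smul]
      calc a • y - a • w + (b • z - b • w) = (a • y + b • z) - (a • w + b • w) := by abel
        _ = 0 := by rw [this, ← hw, sub_self]
    rw [this, map_zero]
  simp only [smul_eq_mul]
  have h4 : a * ψ w + b * ψ w = ψ w := by rw [← add_mul, hab, one_mul]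
  nlinarith

lemma MemC1L.continuousOn {n : ℕ} {L : ℝ} {u : EuclideanSpace ℝ (Fin n) → ℝ}
    {ω : Set (EuclideanSpace ℝ (Fin n))} (h : MemC1L L u ω) : ContinuousOn u ω := by
  intro x hx
  obtain ⟨U, hU, hxU, -, -, hconv⟩ := h x hx
  have h1 := (hconv.continuousOn hU).continuousAt (hU.mem_nhds hxU)
  have h2 : ContinuousAt (fun y : EuclideanSpace ℝ (Fin n) => L / 2 * ‖y‖ ^ 2) x := by fun_prop
  have h3 := h1.sub h2
  refine (h3.congr (Eventually.of_forall fun y => ?_)).continuousWithinAt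
  simp

open Topology in
lemma partB {n q : ℕ} (ω : Set (EuclideanSpace ℝ (Fin n)))
    (u : EuclideanSpace ℝ (Fin n) → ℝ) (L : ℝ) (hL : 0 ≤ L) (hu : MemC1L L u ω)
    (hae : ∀ᵐ x ∂(MeasureTheory.volume :
          MeasureTheory.Measure (EuclideanSpace ℝ (Fin n))), x ∈ ω →
        ∀ (l : EuclideanSpace ℝ (Fin n) →L[ℝ] ℝ)
          (Q : EuclideanSpace ℝ (Fin n) →L[ℝ] EuclideanSpace ℝ (Fin n) →L[ℝ] ℝ),
          (∀ v w, Q v w = Q w v) → HasSecondOrderExpansionAt u x l Q →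
          NegEigAtMost (bilinMatrix Q) q) :
    RealQConvexOn q (fun x => (u x : EReal)) ω := by
  have hucont := hu.continuousOn
  refine ⟨fun x _ => EReal.coe_ne_top _,
    (continuous_coe_real_ereal.comp_continuousOn hucont).upperSemicontinuousOn, ?_⟩
  intro P hP c r hr hball l hsph x ⟨hxB, hxP⟩
  rw [closure_ball _ hr.ne'] at hball
  simp only [EReal.coe_le_coe_iff] at hsph ⊢
  by_contra hlt
  push Not at hlt
  set V := P.direction with hV
  set T : EuclideanSpace ℝ (Fin n) →L[ℝ] EuclideanSpace ℝ (Fin n) := Vᗮ.starProjection with hT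
  have hT0 : ∀ v, T v = 0 ↔ v ∈ V := by
    intro v
    rw [hT, Submodule.starProjection_apply_eq_zero_iff, Submodule.orthogonal_orthogonal]
  have hTn : ∀ v, ‖T v‖ ≤ ‖v‖ := fun v => Submodule.norm_starProjection_apply_le _ v
  obtain ⟨J, hJ⟩ : ∃ J : EuclideanSpace ℝ (Fin n) →L[ℝ] EuclideanSpace ℝ (Fin n) →L[ℝ] ℝ,
      ∀ v w, J v w = inner ℝ v w :=
    ⟨(isBoundedBilinearMap_inner (𝕜 := ℝ)).toContinuousLinearMap, fun v w => rfl⟩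
  have hlc : Continuous l := l.continuous_of_finiteDimensional
  set m := u x - l x with hm
  have hm0 : 0 < m := sub_pos.2 hlt
  set δ := m / (2 * r ^ 2) with hδ
  have hδ0 : 0 < δ := by positivity
  have hδr : δ * r ^ 2 < m := by
    have : δ * r ^ 2 = m / 2 := by rw [hδ]; field_simp
    linarith
  set F : EuclideanSpace ℝ (Fin n) → ℝ := fun y => u y - l y + δ * ‖y - c‖ ^ 2 with hF
  set Nn : EuclideanSpace ℝ (Fin n) → ℝ := fun y => ‖T (y - x)‖ ^ 2 with hNn
  have hNc : Continuous Nn := by fun_prop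
  have hFc : ContinuousOn F (closedBall c r) :=
    ((hucont.mono hball).sub hlc.continuousOn).add (by fun_prop)
  have hNnn : ∀ y, 0 ≤ Nn y := fun y => sq_nonneg _
  -- penalization
  obtain ⟨k, hk0, hk⟩ : ∃ k : ℝ, 0 ≤ k ∧ ∀ y ∈ sphere c r, F y - k * Nn y < m := by
    set T0 := sphere c r ∩ F ⁻¹' Ici m with hT0def
    have hT0c : IsCompact T0 := by
      apply (isCompact_sphere c r).of_isClosed_subset _ inter_subset_left
      exact (hFc.mono sphere_subset_closedBall).preimage_isClosed_of_isClosed isClosed_sphere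
        isClosed_Ici
    have hNpos : ∀ y ∈ T0, 0 < Nn y := by
      rintro y ⟨hy, hym⟩
      refine lt_of_le_of_ne (hNnn y) fun h0 => ?_
      have h1 : T (y - x) = 0 := by
        have := pow_eq_zero_iff (two_ne_zero) |>.1 h0.symm
        exact norm_eq_zero.1 this
      have h2 : y ∈ P := by
        have := AffineSubspace.vadd_mem_of_mem_direction ((hT0 _).1 h1) hxP
        simpa using this
      have h3 := hsph y ⟨hy, h2⟩
      have h4 : ‖y - c‖ = r := by rw [← dist_eq_norm]; exact hy
      have h5 : m ≤ u y - l y + δ * ‖y - c‖ ^ 2 := hym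
      rw [h4] at h5
      linarith
    obtain ⟨k0, hk0⟩ := (hT0c.image_of_continuousOn (f := fun y => F y / Nn y)
      ((hFc.mono (inter_subset_left.trans sphere_subset_closedBall)).div hNc.continuousOn
        (fun y hy => (hNpos y hy).ne'))).bddAbove
    refine ⟨max k0 0, le_max_right _ _, fun y hy => ?_⟩
    by_cases hym : m ≤ F y
    · have hyT : y ∈ T0 := ⟨hy, hym⟩
      have h1 : F y / Nn y ≤ k0 := hk0 ⟨y, hyT, rfl⟩
      rw [div_le_iff₀ (hNpos y hyT)] at h1
      have h2 := mul_le_mul_of_nonneg_right (le_max_left k0 0) (hNnn y)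
      linarith
    · have h2 := mul_nonneg (le_max_right k0 0) (hNnn y)
      push Not at hym
      linarith
  obtain ⟨x0, hx0, hx0max⟩ := (isCompact_closedBall c r).exists_isMaxOn
    ⟨c, mem_closedBall_self hr.le⟩ (f := fun y => F y - k * Nn y)
    (hFc.sub (continuous_const.mul hNc).continuousOn)
  have hx0max : ∀ w ∈ closedBall c r, F w - k * Nn w ≤ F x0 - k * Nn x0 := fun w hw => hx0max hw
  have hx0b : x0 ∈ ball c r := by
    rw [mem_closedBall] at hx0
    rcases hx0.lt_or_eq with h | h
    · exact h
    · have h1 := hk x0 h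
      have h2 := hx0max x hxB
      have h3 : Nn x = 0 := by simp [hNn]
      have h4 : m ≤ F x := by
        have : 0 ≤ δ * ‖x - c‖ ^ 2 := by positivity
        simp only [hF]; linarith
      rw [h3] at h2
      linarith
  obtain ⟨U, hUo, hx0U, hUω, -, hUconv⟩ := hu x0 (hball hx0)
  obtain ⟨ρ, hρ, hρU⟩ := Metric.nhds_basis_closedBall.mem_iff.1
    ((hUo.inter isOpen_ball).mem_nhds ⟨hx0U, hx0b⟩)
  -- the comparison quadratic
  set φ : EuclideanSpace ℝ (Fin n) → ℝ := fun y =>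
    l y - δ * ‖y - c‖ ^ 2 + k * ‖T (y - x)‖ ^ 2 + δ / 2 * ‖y - x0‖ ^ 2 with hφ
  set Dφ : EuclideanSpace ℝ (Fin n) → (EuclideanSpace ℝ (Fin n) →L[ℝ] ℝ) := fun y =>
    LinearMap.toContinuousLinearMap l.linear - (2 * δ) • J (y - c)
      + (2 * k) • (J (T (y - x))).comp T + δ • J (y - x0) with hDφ
  set B : EuclideanSpace ℝ (Fin n) →L[ℝ] EuclideanSpace ℝ (Fin n) →L[ℝ] ℝ :=
    (2 * k) • J.bilinearComp T T - δ • J with hB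
  have hBval : ∀ v w, B v w = 2 * k * inner ℝ (T v) (T w) - δ * inner ℝ v w := by
    intro v w; simp [hB, hJ]
  have hsq : ∀ a h : EuclideanSpace ℝ (Fin n),
      ‖a + h‖ ^ 2 = ‖a‖ ^ 2 + 2 * inner ℝ a h + ‖h‖ ^ 2 := fun a h => norm_add_sq_real a h
  have hφexp : ∀ y h, φ (y + h) = φ y + Dφ y h + 1 / 2 * B h h := by
    intro y h
    have e1 : l (y + h) = l y + l.linear h := by
      have := l.map_vadd y h
      simp only [vadd_eq_add] at this
      rw [add_comm y h, this, add_comm]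
    have e2 : y + h - c = (y - c) + h := by abel
    have e3 : y + h - x0 = (y - x0) + h := by abel
    have e4 : T (y + h - x) = T (y - x) + T h := by rw [← map_add]; congr 1; abel
    have e5 : Dφ y h = l.linear h - 2 * δ * inner ℝ (y - c) h
        + 2 * k * inner ℝ (T (y - x)) (T h) + δ * inner ℝ (y - x0) h := by
      simp only [hDφ, add_apply, sub_apply, smul_apply, ContinuousLinearMap.comp_apply, hJ,
        smul_eq_mul, LinearMap.coe_toContinuousLinearMap']
    rw [e5, hBval]
    simp only [hφ]
    rw [e1, e2, e3, e4, hsq, hsq, hsq, real_inner_self_eq_norm_sq, real_inner_self_eq_norm_sq]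
    ring
  have hψconv : ConvexOn ℝ univ fun y => 2 * k / 2 * ‖y‖ ^ 2 - φ y := by
    refine convexOn_of_support _ (fun y => (2 * k) • J y - Dφ y) fun y w => ?_
    obtain ⟨h, rfl⟩ : ∃ h, w = y + h := ⟨w - y, by abel⟩
    rw [hφexp, hsq, add_sub_cancel_left, hBval, real_inner_self_eq_norm_sq,
      real_inner_self_eq_norm_sq]
    simp only [sub_apply, smul_apply, hJ, smul_eq_mul]
    have h1 : ‖T h‖ ^ 2 ≤ ‖h‖ ^ 2 := pow_le_pow_left₀ (norm_nonneg _) (hTn h) 2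
    have h2 := mul_le_mul_of_nonneg_left h1 hk0
    have h3 : 0 ≤ δ * ‖h‖ ^ 2 := by positivity
    nlinarith
  set g : EuclideanSpace ℝ (Fin n) → ℝ := fun y => u y - φ y with hg
  have hgconv : ConvexOn ℝ (closedBall x0 ρ) fun y => g y + (L + 2 * k) / 2 * ‖y‖ ^ 2 := by
    have h1 := (hUconv.subset (hρU.trans inter_subset_left) (convex_closedBall x0 ρ)).add
      (hψconv.subset (subset_univ _) (convex_closedBall x0 ρ))
    refine h1.congr fun y _ => ?_
    simp only [hg, Pi.add_apply]
    ring
  have hφc : Continuous φ := by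
    simp only [hφ]; fun_prop
  have hgcont : ContinuousOn g (closedBall x0 ρ) :=
    (hucont.mono ((hρU.trans inter_subset_left).trans hUω)).sub hφc.continuousOn
  have hgmax : ∀ w ∈ closedBall x0 ρ, g w ≤ g x0 - δ / 2 * ‖w - x0‖ ^ 2 := by
    intro w hw
    have h1 := hx0max w (ball_subset_closedBall (hρU hw).2)
    simp only [hF, hNn] at h1
    simp only [hg, hφ, sub_self, norm_zero]
    linarith
  obtain ⟨y, hyb, hyS, p, A, hpmax, hexp⟩ := jensen MeasureTheory.volume g x0 ρ (L + 2 * k) (δ / 2)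
    hρ (by positivity) (by positivity) hgcont hgconv hgmax _ (MeasureTheory.ae_iff.1 hae)
  have hyS := not_not.1 hyS
  have hyω : y ∈ ω := hUω (hρU (ball_subset_closedBall hyb)).1
  set Q : EuclideanSpace ℝ (Fin n) →L[ℝ] EuclideanSpace ℝ (Fin n) →L[ℝ] ℝ :=
    (1 / 2 : ℝ) • (J.comp A + (J.comp A).flip) + B with hQ
  have hQval : ∀ v w, Q v w = 1 / 2 * (inner ℝ (A v) w + inner ℝ (A w) v) + B v w := by
    intro v w
    simp only [hQ, add_apply, smul_apply, ContinuousLinearMap.flip_apply,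
      ContinuousLinearMap.comp_apply, hJ, smul_eq_mul]
  have hneg := hyS hyω (J p + Dφ y) Q
    (fun v w => by
      rw [hQval, hQval, hBval, hBval, real_inner_comm (T w) (T v), real_inner_comm w v]; ring)
    (by
      refine hexp.congr_left fun h => ?_
      simp only [hg, add_apply, hJ]
      rw [hφexp, hQval]
      ring)
  obtain ⟨v, hvV, hv0, hvQ⟩ := exists_nonneg_of_negEig Q hneg V hP
  have hvn : 0 < ‖v‖ := norm_pos_iff.2 hv0
  have hTv : T v = 0 := (hT0 v).2 hvV
  rw [hQval, hBval, hTv, inner_zero_left, real_inner_self_eq_norm_sq] at hvQ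
  have hlim : Tendsto (fun t : ℝ => t • v) (𝓝[>] 0) (𝓝 0) := by
    have : Continuous fun t : ℝ => t • v := by fun_prop
    have h := (this.tendsto 0).mono_left (nhdsWithin_le_nhds (s := Ioi 0))
    simpa using h
  have hlim2 : Tendsto (fun t : ℝ => y + t • v) (𝓝[>] 0) (𝓝 y) := by
    simpa using hlim.const_add y
  obtain ⟨t, ⟨ht1, ht2⟩, ht0⟩ := ((hlim.eventually (hexp.def (show 0 < δ / 8 by positivity))).and
    (hlim2.eventually (closedBall_mem_nhds_of_mem hyb)) |>.and self_mem_nhdsWithin).exists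
  have ht0 : 0 < t := ht0
  have h1 := hpmax _ ht2
  rw [add_sub_cancel_left, inner_smul_right] at h1
  rw [Real.norm_eq_abs, Real.norm_eq_abs, abs_of_nonneg (sq_nonneg ‖t • v‖), map_smul,
    inner_smul_left, inner_smul_right, inner_smul_right, norm_smul, Real.norm_eq_abs, mul_pow,
    sq_abs] at ht1
  simp only [conj_trivial] at ht1
  have h2 := (abs_le.1 ht1).1
  have h3 : t ^ 2 * inner ℝ (A v) v ≤ t ^ 2 * (δ / 4 * ‖v‖ ^ 2) := by nlinarith
  have h4 := le_of_mul_le_mul_left h3 (by positivity)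
  have h5 : 0 < δ * ‖v‖ ^ 2 := by positivity
  linarith

/-- (a) If `u` is real q-convex on `ω` and twice differentiable at `p ∈ ω` (i.e. `u` agrees
near `p` with a real-valued `f` having a symmetric second-order expansion), then the real
Hessian at `p` has at most `q` negative eigenvalues.
(b) If `u ∈ C¹_L(ω)` and its real Hessian (as a symmetric second-order expansion) has at
most `q` negative eigenvalues at almost every point of `ω`, then `u` is real q-convex. -/
theorem realQConvex_twice_differentiable {n q : ℕ} (hq : q < n)
    (ω : Set (EuclideanSpace ℝ (Fin n))) (hω : IsOpen ω) :
    (∀ u : EuclideanSpace ℝ (Fin n) → EReal, RealQConvexOn q u ω →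
      ∀ p ∈ ω, ∀ f : EuclideanSpace ℝ (Fin n) → ℝ,
        (∀ᶠ x in nhds p, u x = (f x : EReal)) →
        ∀ (l : EuclideanSpace ℝ (Fin n) →L[ℝ] ℝ)
          (Q : EuclideanSpace ℝ (Fin n) →L[ℝ] EuclideanSpace ℝ (Fin n) →L[ℝ] ℝ),
          (∀ v w, Q v w = Q w v) → HasSecondOrderExpansionAt f p l Q →
          NegEigAtMost (bilinMatrix Q) q) ∧
    (∀ (u : EuclideanSpace ℝ (Fin n) → ℝ) (L : ℝ), 0 ≤ L → MemC1L L u ω →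
      (∀ᵐ x ∂(MeasureTheory.volume :
          MeasureTheory.Measure (EuclideanSpace ℝ (Fin n))), x ∈ ω →
        ∀ (l : EuclideanSpace ℝ (Fin n) →L[ℝ] ℝ)
          (Q : EuclideanSpace ℝ (Fin n) →L[ℝ] EuclideanSpace ℝ (Fin n) →L[ℝ] ℝ),
          (∀ v w, Q v w = Q w v) → HasSecondOrderExpansionAt u x l Q →
          NegEigAtMost (bilinMatrix Q) q) →
      RealQConvexOn q (fun x => (u x : EReal)) ω) := by
  exact ⟨fun u hu p hp f hf l Q hQ hexp => partA ω hω u hu p hp f hf l Q hQ hexp,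
    fun u L hL hu hae => partB ω u L hL hu hae⟩
end
end

section
/- Let ω be an open set in ℝⁿ, let q, r ≥ 0, let u₁ be a real q-convex function on ω and let u₂ be a real r-convex function on ω. Then the sum u₁ + u₂ (with the convention (−∞) + t = −∞) is real (q+r)-convex on ω. -/
open Metric Set Filter

noncomputable section

lemma rqc_subgrad {E : Type*} [NormedAddCommGroup E] [InnerProductSpace ℝ E]
    [FiniteDimensional ℝ E] {f : E → ℝ} (hf : ConvexOn ℝ univ f) (x : E) :
    ∃ p : E, ∀ y, f x + inner ℝ p (y - x) ≤ f y := by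
  have hc : Continuous f := hf.locallyLipschitz.continuous
  have hconv := hf.convex_strict_epigraph
  have hop : IsOpen {p : E × ℝ | p.1 ∈ univ ∧ f p.1 < p.2} := by
    simp only [mem_univ, true_and]
    exact isOpen_lt (hc.comp continuous_fst) continuous_snd
  obtain ⟨L, hL⟩ := geometric_hahn_banach_point_open (x := ((x, f x) : E × ℝ)) hconv hop (by simp)
  set c := L (0, 1) with hcdef
  have hsplit : ∀ (y : E) (s : ℝ), L (y, s) = L (y, 0) + s * c := by
    intro y s
    have : ((y, s) : E × ℝ) = (y, 0) + s • ((0 : E), (1 : ℝ)) := by simp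
    rw [this, map_add, map_smul, smul_eq_mul]
  have hcpos : 0 < c := by
    have := hL (x, f x + 1) (by simp)
    rw [hsplit x (f x), hsplit x (f x + 1)] at this
    linarith
  set M : E →L[ℝ] ℝ := L.comp (ContinuousLinearMap.inl ℝ E ℝ) with hM
  have hMy : ∀ y, L (y, 0) = M y := fun y => by simp [hM]
  refine ⟨(InnerProductSpace.toDual ℝ E).symm (-(c⁻¹) • M), fun y => ?_⟩
  rw [InnerProductSpace.toDual_symm_apply]
  have hle : ∀ e > 0, M x + f x * c ≤ M y + (f y + e) * c := by
    intro e he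
    have := hL (y, f y + e) (by simpa using he)
    rw [hsplit x (f x), hsplit y _, hMy, hMy] at this
    exact this.le
  have hle2 : M x + f x * c ≤ M y + f y * c := by
    refine le_of_forall_pos_le_add fun e he => ?_
    have := hle (e / c) (by positivity)
    have h2 : (f y + e / c) * c = f y * c + e := by field_simp
    linarith
  have : (-(c⁻¹) • M) (y - x) = -(c⁻¹ * (M y - M x)) := by simp
  rw [this]
  have h3 : c⁻¹ * (M y - M x) ≥ f x - f y := by
    rw [ge_iff_le, ← sub_nonneg]
    have : c⁻¹ * (M y - M x) - (f x - f y) = c⁻¹ * ((M y + f y * c) - (M x + f x * c)) := by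
      field_simp; ring
    rw [this]
    have := inv_pos.mpr hcpos
    apply mul_nonneg this.le; linarith
  linarith

/-- a vector whose inner products are bounded by a quadratic vanishes. -/
lemma rqc_eq_zero {E : Type*} [NormedAddCommGroup E] [InnerProductSpace ℝ E]
    {p : E} {κ : ℝ} (h : ∀ k : E, inner ℝ p k ≤ κ * ‖k‖ ^ 2) : p = 0 := by
  by_contra hp
  have hp' : 0 < ‖p‖ := norm_pos_iff.mpr hp
  have h1 : ∀ t : ℝ, 0 < t → 1 ≤ κ * t := by
    intro t ht
    have := h (t • p)
    rw [inner_smul_right, real_inner_self_eq_norm_sq, norm_smul, mul_pow, Real.norm_eq_abs,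
      sq_abs] at this
    have h2 : 0 < t * ‖p‖ ^ 2 := by positivity
    have h3 : 1 * (t * ‖p‖ ^ 2) ≤ (κ * t) * (t * ‖p‖^2) := by nlinarith
    exact le_of_mul_le_mul_right h3 h2
  have hk : 0 < κ := by have := h1 1 one_pos; linarith
  have := h1 (1 / (2 * κ)) (by positivity)
  have h3 : κ * (1 / (2 * κ)) = 1 / 2 := by field_simp
  linarith

lemma rqc_lip {E : Type*} [NormedAddCommGroup E] [InnerProductSpace ℝ E]
    {F : E → ℝ} {p : E → E} {S : Set E} {κ : NNReal}
    (h0 : ∀ x ∈ S, ∀ y, 0 ≤ F y - F x - inner ℝ (p x) (y - x))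
    (h1 : ∀ x ∈ S, ∀ y, F y - F x - inner ℝ (p x) (y - x) ≤ κ * ‖y - x‖ ^ 2) :
    LipschitzOnWith (4 * κ) p S := by
  apply LipschitzOnWith.of_dist_le_mul
  intro x hx y hy
  rw [dist_eq_norm, dist_eq_norm]
  by_cases hd : p x - p y = 0
  · rw [hd, norm_zero]; positivity
  have hd' : 0 < ‖p x - p y‖ := norm_pos_iff.mpr hd
  set t : E := (‖x - y‖ / ‖p x - p y‖) • (p x - p y) with ht
  have htn : ‖t‖ = ‖x - y‖ := by
    rw [ht, norm_smul, Real.norm_of_nonneg (by positivity)]; field_simp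
  have a1 := h0 x hx (x + t)
  have a2 := h1 y hy (x + t)
  have a3 := h0 y hy x
  have e1 : x + t - x = t := by abel
  have e2 : x + t - y = t + (x - y) := by abel
  rw [e1] at a1
  rw [e2, inner_add_right] at a2
  have a4 : inner ℝ (p x - p y) t ≤ κ * ‖t + (x - y)‖ ^ 2 := by
    rw [inner_sub_left]; linarith
  have a5 : inner ℝ (p x - p y) t = ‖x - y‖ * ‖p x - p y‖ := by
    rw [ht, inner_smul_right, real_inner_self_eq_norm_sq]; field_simp
  have a6 : ‖t + (x - y)‖ ≤ 2 * ‖x - y‖ := by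
    have := norm_add_le t (x - y); linarith
  have a7 : ‖t + (x - y)‖ ^ 2 ≤ (2 * ‖x - y‖) ^ 2 := by gcongr
  by_cases hxy : x - y = 0
  · exact absurd (by rw [sub_eq_zero.mp hxy, sub_self]) hd
  have hxy' : 0 < ‖x - y‖ := norm_pos_iff.mpr hxy
  have hk : (0:ℝ) ≤ κ := κ.2
  rw [a5] at a4
  have : ‖x - y‖ * ‖p x - p y‖ ≤ ‖x - y‖ * (4 * κ * ‖x - y‖) := by nlinarith
  have := le_of_mul_le_mul_left this hxy'
  simpa using this

lemma rqc_sum_sq {E : Type*} [NormedAddCommGroup E] [InnerProductSpace ℝ E] (x y : E) {a b : ℝ}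
    (hab : a + b = 1) :
    ‖a • x + b • y‖ ^ 2 = a * ‖x‖ ^ 2 + b * ‖y‖ ^ 2 - a * b * ‖x - y‖ ^ 2 := by
  rw [norm_add_sq_real, norm_sub_sq_real, inner_smul_left, inner_smul_right, norm_smul, norm_smul,
    mul_pow, mul_pow, Real.norm_eq_abs, Real.norm_eq_abs, sq_abs, sq_abs]
  obtain rfl : b = 1 - a := by linarith
  simp; ring

/-- Two-sided quadratic bounds with a gradient. -/
lemma rqc_grad {E : Type*} [NormedAddCommGroup E] [InnerProductSpace ℝ E]
    [FiniteDimensional ℝ E] {G : E → ℝ} {κ : ℝ} (hG : ConvexOn ℝ univ G)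
    (hG' : ConvexOn ℝ univ (fun x => κ * ‖x‖ ^ 2 - G x)) :
    ∃ p : E → E, ∀ x y, 0 ≤ G y - G x - inner ℝ (p x) (y - x) ∧
      G y - G x - inner ℝ (p x) (y - x) ≤ κ * ‖y - x‖ ^ 2 := by
  have hx : ∀ x, ∃ p : E, ∀ y, 0 ≤ G y - G x - inner ℝ p (y - x) ∧
      G y - G x - inner ℝ p (y - x) ≤ κ * ‖y - x‖ ^ 2 := by
    intro x
    obtain ⟨p, hp⟩ := rqc_subgrad hG x
    obtain ⟨q, hq⟩ := rqc_subgrad hG' x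
    have key : ∀ y, G y ≤ G x + inner ℝ ((2 * κ) • x - q) (y - x) + κ * ‖y - x‖ ^ 2 := by
      intro y
      have := hq y
      have e : ‖y‖ ^ 2 = ‖x‖ ^ 2 + 2 * inner ℝ x (y - x) + ‖y - x‖ ^ 2 := by
        rw [← norm_add_sq_real]; congr 2; abel
      rw [inner_sub_left, inner_smul_left]
      simp only [conj_trivial]
      rw [e] at this
      linarith
    have hpq : p - ((2 * κ) • x - q) = 0 := by
      apply rqc_eq_zero (κ := κ)
      intro k
      have h1 := hp (x + k)
      have h2 := key (x + k)
      rw [add_sub_cancel_left] at h1 h2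
      rw [inner_sub_left]; linarith
    refine ⟨p, fun y => ⟨by have := hp y; linarith, ?_⟩⟩
    have := key y
    rw [← sub_eq_zero.mp hpq] at this
    linarith
  choose p hp using hx
  exact ⟨p, hp⟩

/-- Second order expansion. -/
lemma rqc_taylor {E : Type*} [NormedAddCommGroup E] [InnerProductSpace ℝ E]
    {G : E → ℝ} {κ : ℝ} {p : E → E} (hp : ∀ x y, 0 ≤ G y - G x - inner ℝ (p x) (y - x) ∧
      G y - G x - inner ℝ (p x) (y - x) ≤ κ * ‖y - x‖ ^ 2) {x : E} {A : E →L[ℝ] E}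
    (hA : HasFDerivAt p A x) {η : ℝ} (hη : 0 < η) :
    ∃ s > 0, ∀ k : E, ‖k‖ < s →
      |G (x + k) - G x - inner ℝ (p x) k - inner ℝ (A k) k / 2| ≤ η * ‖k‖ ^ 2 := by
  have h1 := (hasFDerivAt_iff_isLittleO_nhds_zero.mp hA).def hη
  obtain ⟨s, hs, h2⟩ := Metric.eventually_nhds_iff.mp h1
  refine ⟨s, hs, fun k hk => ?_⟩
  have hder : ∀ y, HasFDerivAt G (innerSL ℝ (p y)) y := by
    intro y
    rw [hasFDerivAt_iff_isLittleO_nhds_zero]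
    have : (fun h : E => G (y + h) - G y - (innerSL ℝ (p y)) h) =O[nhds 0] fun h => ‖h‖ ^ 2 := by
      apply Asymptotics.IsBigO.of_bound κ
      filter_upwards with h
      have := hp y (y + h)
      rw [add_sub_cancel_left] at this
      rw [innerSL_apply_apply, Real.norm_of_nonneg this.1, Real.norm_of_nonneg (by positivity)]
      exact this.2
    refine this.trans_isLittleO ?_
    exact Asymptotics.IsLittleO.of_norm_right (Asymptotics.isLittleO_norm_pow_id one_lt_two).norm_right
  let θ : ℝ → ℝ := fun τ => G (x + τ • k) - τ * inner ℝ (p x) k - τ ^ 2 * (inner ℝ (A k) k / 2)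
  have hθ : ∀ τ, HasDerivAt θ (inner ℝ (p (x + τ • k) - p x - A (τ • k)) k) τ := by
    intro τ
    have e1 : HasDerivAt (fun τ : ℝ => x + τ • k) k τ := by
      simpa using ((hasDerivAt_id τ).smul_const k).const_add x
    have e2 := (hder (x + τ • k)).comp_hasDerivAt τ e1
    have e3 := (e2.sub ((hasDerivAt_id τ).mul_const (inner ℝ (p x) k))).sub
      (((hasDerivAt_id τ).pow 2).mul_const (inner ℝ (A k) k / 2))
    refine e3.congr_deriv ?_
    simp [inner_sub_left, inner_smul_left]
    ring
  have hb := Convex.norm_image_sub_le_of_norm_hasDerivWithin_le (f := θ)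
    (f' := fun τ => inner ℝ (p (x + τ • k) - p x - A (τ • k)) k) (s := Icc 0 1)
    (C := η * ‖k‖ ^ 2) (x := 0) (y := 1) (fun τ _ => (hθ τ).hasDerivWithinAt) ?_
    (convex_Icc 0 1) (by simp) (by simp)
  · simp only [θ, Real.norm_eq_abs] at hb
    simp at hb
    convert hb using 2
    ring
  · intro τ hτ
    have hn : ‖τ • k‖ ≤ ‖k‖ := by
      rw [norm_smul, Real.norm_of_nonneg hτ.1]
      nlinarith [hτ.2, norm_nonneg k]
    have h3 := h2 (y := τ • k) (by rw [dist_zero_right]; linarith)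
    calc _ ≤ ‖p (x + τ • k) - p x - A (τ • k)‖ * ‖k‖ := norm_inner_le_norm _ _
      _ ≤ (η * ‖k‖) * ‖k‖ := by gcongr; exact h3.trans (by gcongr)
      _ = _ := by ring

/-- The largest convex function below a family of semiconcave functions is `C^{1,1}`. -/
lemma rqc_envelope {E ι : Type*} [NormedAddCommGroup E] [InnerProductSpace ℝ E] [Nonempty ι]
    {f : E → ℝ} (hf : ConvexOn ℝ univ f) {κ : ℝ} (w : ι → E → ℝ)
    (hw : ∀ i, ConvexOn ℝ univ (fun x => κ * ‖x‖ ^ 2 - w i x)) (hfw : ∀ i x, f x ≤ w i x) :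
    ∃ G : E → ℝ, (∀ x, f x ≤ G x) ∧ (∀ i x, G x ≤ w i x) ∧ ConvexOn ℝ univ G ∧
      ConvexOn ℝ univ (fun x => κ * ‖x‖ ^ 2 - G x) := by
  let T : Set (E → ℝ) := {g | ConvexOn ℝ univ g ∧ ∀ i x, g x ≤ w i x}
  have hfT : f ∈ T := ⟨hf, hfw⟩
  let G : E → ℝ := fun x => sSup ((fun g : E → ℝ => g x) '' T)
  have hbdd : ∀ x, BddAbove ((fun g : E → ℝ => g x) '' T) := by
    intro x
    refine ⟨w (Classical.arbitrary ι) x, ?_⟩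
    rintro _ ⟨g, hg, rfl⟩
    exact hg.2 _ _
  have hle : ∀ g ∈ T, ∀ x, g x ≤ G x := fun g hg x => le_csSup (hbdd x) ⟨g, hg, rfl⟩
  have hGle : ∀ x b, (∀ g ∈ T, g x ≤ b) → G x ≤ b := by
    intro x b hb
    refine csSup_le ⟨_, f, hfT, rfl⟩ ?_
    rintro _ ⟨g, hg, rfl⟩
    exact hb g hg
  have hGw : ∀ i x, G x ≤ w i x := fun i x => hGle x _ fun g hg => hg.2 i x
  have hGc : ConvexOn ℝ univ G := by
    refine ⟨convex_univ, fun x _ y _ a b ha hb hab => hGle _ _ fun g hg => ?_⟩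
    refine (hg.1.2 (mem_univ x) (mem_univ y) ha hb hab).trans ?_
    have := hle g hg x
    have := hle g hg y
    simp only [smul_eq_mul]
    gcongr
  refine ⟨G, hle f hfT, hGw, hGc, convex_univ, fun x _ y _ a b ha hb hab => ?_⟩
  let d := x - y
  have hgT : (fun z => a * G (z + b • d) + b * G (z + (-a) • d) - κ * (a * b * ‖d‖ ^ 2)) ∈ T := by
    constructor
    · have c1 : ConvexOn ℝ univ (fun z => G (z + b • d)) := by
        simpa [Function.comp_def] using hGc.translate_left (b • d)
      have c2 : ConvexOn ℝ univ (fun z => G (z + (-a) • d)) := by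
        simpa [Function.comp_def] using hGc.translate_left ((-a) • d)
      have c3 := (c1.smul ha).add (c2.smul hb)
      have c4 := c3.add_const (-(κ * (a * b * ‖d‖ ^ 2)))
      exact c4
    · intro i z
      have h1 := (hw i).2 (mem_univ (z + b • d)) (mem_univ (z + (-a) • d)) ha hb hab
      have e1 : a • (z + b • d) + b • (z + (-a) • d) = z := by
        have : a • (z + b • d) + b • (z + (-a) • d) = (a + b) • z := by module
        rw [this, hab, one_smul]
      have e2 := rqc_sum_sq (z + b • d) (z + (-a) • d) hab
      have e3 : z + b • d - (z + (-a) • d) = d := by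
        have : z + b • d - (z + (-a) • d) = (a + b) • d := by module
        rw [this, hab, one_smul]
      rw [e1] at h1 e2
      rw [e3] at e2
      simp only [smul_eq_mul] at h1
      have := hGw i (z + b • d)
      have := hGw i (z + (-a) • d)
      have i1 : a * G (z + b • d) ≤ a * w i (z + b • d) := by gcongr
      have i2 : b * G (z + (-a) • d) ≤ b * w i (z + (-a) • d) := by gcongr
      rw [e2] at h1
      linarith
  have h1 := hle _ hgT (a • x + b • y)
  have e1 : a • x + b • y + b • d = x := by
    have : a • x + b • y + b • d = (a + b) • x := by simp only [d]; module
    rw [this, hab, one_smul]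
  have e2 : a • x + b • y + (-a) • d = y := by
    have : a • x + b • y + (-a) • d = (a + b) • y := by simp only [d]; module
    rw [this, hab, one_smul]
  simp only [e1, e2] at h1
  have e3 := rqc_sum_sq x y hab
  simp only [smul_eq_mul]
  rw [e3]
  simp only [d] at h1
  linarith

lemma rqc_core {E : Type*} [NormedAddCommGroup E] [InnerProductSpace ℝ E]
    [FiniteDimensional ℝ E] {f₁ f₂ : E → ℝ} (hf₁ : ConvexOn ℝ univ f₁)
    (hf₂ : ConvexOn ℝ univ f₂) {κ ρ : ℝ} (hκ : 0 < κ) (hρ : 0 < ρ)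
    (hmax : ∀ a : E, ‖a‖ < ρ → ∃ x, ∀ y, f₁ y + f₂ y - κ * ‖y‖ ^ 2 - inner ℝ a y
      ≤ f₁ x + f₂ x - κ * ‖x‖ ^ 2 - inner ℝ a x) :
    ∃ x a p₁ p₂ : E, ∃ A : E →L[ℝ] E, ‖a‖ < ρ ∧
      (∀ y, f₁ y + f₂ y - κ * ‖y‖ ^ 2 - inner ℝ a y
        ≤ f₁ x + f₂ x - κ * ‖x‖ ^ 2 - inner ℝ a x) ∧
      (∀ η > 0, ∃ s > 0, ∀ k : E, ‖k‖ < s →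
        f₁ (x + k) ≤ f₁ x + inner ℝ p₁ k + inner ℝ (A k) k / 2 + η * ‖k‖ ^ 2 ∧
        f₂ (x + k) ≤ f₂ x + inner ℝ p₂ k + (κ * ‖k‖ ^ 2 - inner ℝ (A k) k / 2)
          + η * ‖k‖ ^ 2) := by
  borelize E
  let φ : E → ℝ := fun y => f₁ y + f₂ y - κ * ‖y‖ ^ 2
  let C : E → E → Prop := fun x a => ‖a‖ < ρ ∧ ∀ y, φ y - inner ℝ a y ≤ φ x - inner ℝ a x
  let K : Set E := {x | ∃ a, C x a}
  have hC : ∀ x a, C x a → ∀ y, 0 ≤ - φ y - (- φ x) - inner ℝ (-a) (y - x) ∧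
      - φ y - (- φ x) - inner ℝ (-a) (y - x) ≤ κ * ‖y - x‖ ^ 2 := by
    intro x a hxa
    obtain ⟨q₁, hq₁⟩ := rqc_subgrad hf₁ x
    obtain ⟨q₂, hq₂⟩ := rqc_subgrad hf₂ x
    have hup : ∀ y, φ y ≤ φ x + inner ℝ a (y - x) := by
      intro y
      have := hxa.2 y
      rw [inner_sub_right]; linarith
    have hlow : ∀ y, φ x + inner ℝ (q₁ + q₂ - (2 * κ) • x) (y - x) - κ * ‖y - x‖ ^ 2 ≤ φ y := by
      intro y
      have e : ‖y‖ ^ 2 = ‖x‖ ^ 2 + 2 * inner ℝ x (y - x) + ‖y - x‖ ^ 2 := by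
        rw [← norm_add_sq_real]; congr 2; abel
      have := hq₁ y
      have := hq₂ y
      rw [inner_sub_left, inner_add_left, inner_smul_left]
      simp only [conj_trivial, φ]
      rw [e]
      linarith
    have heq : (q₁ + q₂ - (2 * κ) • x) - a = 0 := by
      apply rqc_eq_zero (κ := κ)
      intro k
      have h1 := hup (x + k)
      have h2 := hlow (x + k)
      rw [add_sub_cancel_left] at h1 h2
      rw [inner_sub_left]; linarith
    rw [sub_eq_zero.mp heq] at hlow
    intro y
    rw [inner_neg_left]
    constructor
    · have := hup y; linarith
    · have := hlow y; linarith
  choose! sel hsel using (fun x (hx : x ∈ K) => hx)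
  have hlipK : LipschitzOnWith (4 * κ.toNNReal) (fun x => - sel x) K := by
    apply rqc_lip (F := fun y => - φ y)
    · intro x hx y
      exact (hC x _ (hsel x hx) y).1
    · intro x hx y
      rw [Real.coe_toNNReal κ hκ.le]
      exact (hC x _ (hsel x hx) y).2
  have huniq : ∀ x a, C x a → sel x = a := by
    intro x a hxa
    have hx : x ∈ K := ⟨a, hxa⟩
    rw [← sub_eq_zero]
    apply rqc_eq_zero (κ := κ)
    intro k
    have h1 := (hC x a hxa (x + k)).1
    have h2 := (hC x _ (hsel x hx) (x + k)).2
    rw [add_sub_cancel_left, inner_neg_left] at h1 h2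
    rw [inner_sub_left]; linarith
  have himg : ball (0 : E) ρ ⊆ (fun x => - sel x) '' K := by
    intro b hb
    have hb' : ‖-b‖ < ρ := by simpa using hb
    obtain ⟨x, hx⟩ := hmax (-b) hb'
    have hxC : C x (-b) := ⟨hb', hx⟩
    exact ⟨x, ⟨_, hxC⟩, by simp [huniq x _ hxC]⟩
  have hKne : K.Nonempty := by
    obtain ⟨x, hx, -⟩ := himg (mem_ball_self hρ)
    exact ⟨x, hx⟩
  let ι := {xa : E × E // C xa.1 xa.2}
  have : Nonempty ι := by
    obtain ⟨x, a, h⟩ := hKne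
    exact ⟨⟨(x, a), h⟩⟩
  let w : ι → E → ℝ := fun i y => φ i.1.1 + inner ℝ i.1.2 (y - i.1.1) + κ * ‖y‖ ^ 2 - f₂ y
  have hw : ∀ i, ConvexOn ℝ univ (fun x => κ * ‖x‖ ^ 2 - w i x) := by
    intro i
    refine ⟨convex_univ, fun x _ y _ a b ha hb hab => ?_⟩
    have h := hf₂.2 (mem_univ x) (mem_univ y) ha hb hab
    simp only [smul_eq_mul, w] at h ⊢
    rw [inner_sub_right, inner_sub_right, inner_sub_right, inner_add_right, inner_smul_right,
      inner_smul_right]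
    obtain rfl : b = 1 - a := by linarith
    linarith
  have hfw : ∀ i x, f₁ x ≤ w i x := by
    intro i x
    have := i.2.2 x
    simp only [w, φ] at this ⊢
    rw [inner_sub_right]
    linarith
  obtain ⟨G, hfG, hGw, hGc, hGc'⟩ := rqc_envelope hf₁ w hw hfw
  obtain ⟨p, hp⟩ := rqc_grad hGc hGc'
  have hplip : LipschitzWith (4 * κ.toNNReal) p := by
    rw [← lipschitzOnWith_univ]
    apply rqc_lip (F := G)
    · intro x _ y
      exact (hp x y).1
    · intro x _ y
      rw [Real.coe_toNNReal κ hκ.le]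
      exact (hp x y).2
  let μ : MeasureTheory.Measure E := MeasureTheory.Measure.hausdorffMeasure (Module.finrank ℝ E)
  have : μ.IsAddHaarMeasure := MeasureTheory.isAddHaarMeasure_hausdorffMeasure
  have hae := hplip.ae_differentiableAt (μ := μ)
  have hex : ∃ x ∈ K, DifferentiableAt ℝ p x := by
    by_contra! hcon
    have hK0 : μ K = 0 := by
      refine MeasureTheory.measure_mono_null ?_ (MeasureTheory.ae_iff.mp hae)
      intro x hx
      exact hcon x hx
    have h1 := hlipK.hausdorffMeasure_image_le (d := (Module.finrank ℝ E : ℝ)) (by positivity)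
    have h2 : μ (ball (0:E) ρ) ≤ 0 := by
      refine (MeasureTheory.measure_mono himg).trans (h1.trans ?_)
      change _ * μ K ≤ 0
      rw [hK0, mul_zero]
    exact (measure_ball_pos μ (0:E) hρ).not_ge h2
  obtain ⟨x, ⟨a, hxa⟩, hdx⟩ := hex
  refine ⟨x, a, p x, a + (2 * κ) • x - p x, fderiv ℝ p x, hxa.1, hxa.2, fun η hη => ?_⟩
  obtain ⟨s, hs, hT⟩ := rqc_taylor hp hdx.hasFDerivAt hη
  refine ⟨s, hs, fun k hk => ?_⟩
  have h1 := abs_le.mp (hT k hk)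
  have h2 := hfG (x + k)
  have h3 := hGw ⟨(x, a), hxa⟩ (x + k)
  have h4 := hGw ⟨(x, a), hxa⟩ x
  have h5 := hfG x
  simp only [w, φ, sub_self, inner_zero_right, add_sub_cancel_left] at h3 h4
  rw [norm_add_sq_real] at h3
  have hGx : G x = f₁ x := by linarith
  rw [hGx] at h1
  constructor
  · linarith
  · rw [inner_sub_left, inner_add_left, inner_smul_left]
    simp only [conj_trivial]
    linarith

lemma rqc_linalg {E : Type*} [NormedAddCommGroup E] [InnerProductSpace ℝ E]
    [FiniteDimensional ℝ E] {q r : ℕ} (hE : Module.finrank ℝ E = q + r + 1)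
    (A : E →L[ℝ] E) (c : ℝ) :
    (∃ V : Submodule ℝ E, Module.finrank ℝ V = q + 1 ∧
      ∀ k ∈ V, inner ℝ (A k) k / 2 ≤ c * ‖k‖ ^ 2) ∨
    (∃ V : Submodule ℝ E, Module.finrank ℝ V = r + 1 ∧
      ∀ k ∈ V, c * ‖k‖ ^ 2 ≤ inner ℝ (A k) k / 2) := by
  classical
  let T : E →ₗ[ℝ] E := ((A + ContinuousLinearMap.adjoint A : E →L[ℝ] E) : E →ₗ[ℝ] E)
  have hT : T.IsSymmetric := by
    intro x y
    simp only [T, ContinuousLinearMap.coe_coe, add_apply, inner_add_left,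
      inner_add_right, ContinuousLinearMap.adjoint_inner_left,
      ContinuousLinearMap.adjoint_inner_right]
    ring
  have hTk : ∀ k, inner ℝ (T k) k = 2 * inner ℝ (A k) k := by
    intro k
    simp only [T, ContinuousLinearMap.coe_coe, add_apply, inner_add_left,
      ContinuousLinearMap.adjoint_inner_left]
    rw [real_inner_comm k (A k)]; ring
  let b := hT.eigenvectorBasis hE
  let ev := hT.eigenvalues hE
  have hform : ∀ k, inner ℝ (T k) k = ∑ i, ev i * (inner ℝ (b i) k) ^ 2 := by
    intro k
    rw [← b.sum_inner_mul_inner]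
    refine Finset.sum_congr rfl fun i _ => ?_
    have h1 : inner ℝ (T k) (b i) = ev i * inner ℝ (b i) k := by
      rw [hT k (b i), hT.apply_eigenvectorBasis hE i]
      simp only [inner_smul_right]
      rw [real_inner_comm]
      rfl
    rw [h1]; ring
  have hnorm : ∀ k, ‖k‖ ^ 2 = ∑ i, (inner ℝ (b i) k) ^ 2 := by
    intro k
    rw [← real_inner_self_eq_norm_sq, ← b.sum_inner_mul_inner]
    refine Finset.sum_congr rfl fun i _ => ?_
    rw [real_inner_comm]; ring
  have hspan : ∀ S : Finset (Fin (q + r + 1)),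
      Module.finrank ℝ (Submodule.span ℝ (b '' (S : Set (Fin (q + r + 1))))) = S.card ∧
      ∀ k ∈ Submodule.span ℝ (b '' (S : Set (Fin (q + r + 1)))), ∀ i ∉ S,
        inner ℝ (b i) k = 0 := by
    intro S
    constructor
    · have h1 : LinearIndepOn ℝ b (S : Set (Fin (q + r + 1))) :=
        b.orthonormal.linearIndependent.linearIndepOn _
      have h2 := finrank_span_set_eq_card (R := ℝ) (s := b '' (S : Set (Fin (q + r + 1)))) h1.id_image
      rw [h2, Set.toFinset_image, Finset.toFinset_coe, Finset.card_image_of_injective]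
      exact b.orthonormal.linearIndependent.injective
    · intro k hk i hi
      induction hk using Submodule.span_induction with
      | mem x hx =>
        obtain ⟨j, hj, rfl⟩ := hx
        exact b.orthonormal.2 (by rintro rfl; exact hi hj)
      | zero => simp
      | add x y _ _ hx hy => rw [inner_add_right, hx, hy, add_zero]
      | smul a x _ hx => rw [inner_smul_right, hx, mul_zero]
  let S : Finset (Fin (q + r + 1)) := Finset.univ.filter (fun i => ev i ≤ 4 * c)
  have hcard : S.card + Sᶜ.card = q + r + 1 := by simp [Finset.card_add_card_compl]
  by_cases hS : q + 1 ≤ S.card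
  · left
    obtain ⟨S', hS', hc⟩ := Finset.exists_subset_card_eq hS
    refine ⟨_, (hspan S').1.trans hc, fun k hk => ?_⟩
    have h0 := (hspan S').2 k hk
    have : inner ℝ (T k) k ≤ 4 * c * ‖k‖ ^ 2 := by
      rw [hform, hnorm, Finset.mul_sum]
      refine Finset.sum_le_sum fun i _ => ?_
      by_cases hi : i ∈ S'
      · have := (Finset.mem_filter.mp (hS' hi)).2
        gcongr
      · rw [h0 i hi]; simp
    rw [hTk] at this
    linarith
  · right
    have hS2 : r + 1 ≤ Sᶜ.card := by omega
    obtain ⟨S', hS', hc⟩ := Finset.exists_subset_card_eq hS2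
    refine ⟨_, (hspan S').1.trans hc, fun k hk => ?_⟩
    have h0 := (hspan S').2 k hk
    have : 4 * c * ‖k‖ ^ 2 ≤ inner ℝ (T k) k := by
      rw [hform, hnorm, Finset.mul_sum]
      refine Finset.sum_le_sum fun i _ => ?_
      by_cases hi : i ∈ S'
      · have h1 := hS' hi
        simp only [S, Finset.mem_compl, Finset.mem_filter, Finset.mem_univ, true_and,
          not_le] at h1
        gcongr
      · rw [h0 i hi]; simp
    rw [hTk] at this
    linarith

lemma rqc_supconv {E : Type*} [NormedAddCommGroup E] [InnerProductSpace ℝ E]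
    {B : Set E} (hB : IsCompact B) {v : E → EReal} (hv : UpperSemicontinuousOn v B)
    (hv' : ∀ z ∈ B, v z ≠ ⊤) (h0 : (0 : E) ∈ B) (hv0 : v 0 ≠ ⊥) (t : ℝ) :
    ∃ f : E → ℝ, ConvexOn ℝ univ f ∧
      (∀ x, ∃ z ∈ B, v z ≠ ⊥ ∧ f x = (v z).toReal + t * (2 * inner ℝ x z - ‖z‖ ^ 2)) ∧
      (∀ x, ∀ z ∈ B, v z ≠ ⊥ → (v z).toReal + t * (2 * inner ℝ x z - ‖z‖ ^ 2) ≤ f x) := by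
  have hx : ∀ x : E, ∃ z ∈ B, v z ≠ ⊥ ∧ ∀ y ∈ B, v y ≠ ⊥ →
      (v y).toReal + t * (2 * inner ℝ x y - ‖y‖ ^ 2)
        ≤ (v z).toReal + t * (2 * inner ℝ x z - ‖z‖ ^ 2) := by
    intro x
    have hcont : Continuous (fun z : E => ((t * (2 * inner ℝ x z - ‖z‖ ^ 2) : ℝ) : EReal)) := by
      apply continuous_coe_real_ereal.comp
      fun_prop
    have husc : UpperSemicontinuousOn
        (fun z => v z + ((t * (2 * inner ℝ x z - ‖z‖ ^ 2) : ℝ) : EReal)) B := by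
      apply hv.add' (hcont.continuousOn.upperSemicontinuousOn)
      intro z hz
      exact EReal.continuousAt_add (Or.inr (EReal.coe_ne_bot _)) (Or.inr (EReal.coe_ne_top _))
    obtain ⟨z, hz, hmax⟩ := husc.exists_isMaxOn ⟨0, h0⟩ hB
    have hzb : v z ≠ ⊥ := by
      intro hzb
      have := hmax h0
      simp only [mem_ofPred_eq, hzb, EReal.bot_add, le_bot_iff, EReal.add_eq_bot_iff] at this
      rcases this with h | h
      · exact hv0 h
      · exact EReal.coe_ne_bot _ h
    refine ⟨z, hz, hzb, fun y hy hyb => ?_⟩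
    have := hmax hy
    simp only [mem_ofPred_eq] at this
    rw [← EReal.coe_toReal (hv' y hy) hyb, ← EReal.coe_toReal (hv' z hz) hzb] at this
    exact_mod_cast this
  choose Z hZ hZb hZm using hx
  refine ⟨fun x => (v (Z x)).toReal + t * (2 * inner ℝ x (Z x) - ‖Z x‖ ^ 2), ?_,
    fun x => ⟨Z x, hZ x, hZb x, rfl⟩, fun x z hz hzb => hZm x z hz hzb⟩
  refine ⟨convex_univ, fun x _ y _ a b ha hb hab => ?_⟩
  have h1 := hZm x _ (hZ (a • x + b • y)) (hZb (a • x + b • y))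
  have h2 := hZm y _ (hZ (a • x + b • y)) (hZb (a • x + b • y))
  simp only [smul_eq_mul]
  set w := Z (a • x + b • y)
  have h3 := mul_le_mul_of_nonneg_left h1 ha
  have h4 := mul_le_mul_of_nonneg_left h2 hb
  refine le_trans (le_of_eq ?_) (add_le_add h3 h4)
  rw [inner_add_left, inner_smul_left, inner_smul_left]
  simp only [conj_trivial]
  obtain rfl : b = 1 - a := by linarith
  ring

lemma rqc_bound {E : Type*} [NormedAddCommGroup E]
    {B : Set E} (hB : IsCompact B) {v : E → EReal} (hv : UpperSemicontinuousOn v B)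
    (hv' : ∀ z ∈ B, v z ≠ ⊤) (h0 : (0 : E) ∈ B) : ∃ M : ℝ, 0 ≤ M ∧ ∀ z ∈ B, (v z).toReal ≤ M := by
  obtain ⟨z, hz, hmax⟩ := hv.exists_isMaxOn ⟨0, h0⟩ hB
  refine ⟨max 0 (v z).toReal, le_max_left _ _, fun y hy => ?_⟩
  by_cases hyb : v y = ⊥
  · rw [hyb]; simp
  · exact (EReal.toReal_le_toReal (hmax hy) hyb (hv' z hz)).trans (le_max_right _ _)

lemma rqc_ereal_split {a b : EReal} {s : ℝ} (ha : a ≠ ⊤) (hb : b ≠ ⊤) (h : a + b < (s : EReal)) :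
    ∃ c d : ℝ, a < c ∧ b < d ∧ c + d < s := by
  induction a with
  | top => exact absurd rfl ha
  | bot =>
    induction b with
    | top => exact absurd rfl hb
    | bot => exact ⟨0, s - 1, EReal.bot_lt_coe _, EReal.bot_lt_coe _, by linarith⟩
    | coe b =>
      exact ⟨s - b - 2, b + 1, EReal.bot_lt_coe _, by exact_mod_cast (by linarith), by linarith⟩
  | coe a =>
    induction b with
    | top => exact absurd rfl hb
    | bot =>
      exact ⟨a + 1, s - a - 2, by exact_mod_cast (by linarith), EReal.bot_lt_coe _, by linarith⟩
    | coe b =>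
      have h' : a + b < s := by exact_mod_cast h
      refine ⟨a + (s - a - b) / 3, b + (s - a - b) / 3, ?_, ?_, by linarith⟩
      · exact_mod_cast (by linarith)
      · exact_mod_cast (by linarith)

lemma rqc_params {E : Type*} [NormedAddCommGroup E] [InnerProductSpace ℝ E]
    {B U : Set E} (hB : IsCompact B) (hU : IsOpen U) (h0 : (0 : E) ∈ B) {v₁ v₂ : E → EReal}
    (hv₁ : UpperSemicontinuousOn v₁ B) (hv₂ : UpperSemicontinuousOn v₂ B)
    (ht₁ : ∀ z ∈ B, v₁ z ≠ ⊤) (ht₂ : ∀ z ∈ B, v₂ z ≠ ⊤) {δ g : ℝ} (hδ : 0 < δ)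
    (hS : ∀ z ∈ B, z ∉ U → v₁ z + v₂ z < ((g - δ * ‖z‖ ^ 2 : ℝ) : EReal)) :
    ∃ t ρ : ℝ, δ < t ∧ 0 < ρ ∧ ρ ≤ 1 ∧ ∀ a x z₁ z₂ : E, ‖a‖ < ρ → z₁ ∈ B → z₂ ∈ B →
      v₁ z₁ ≠ ⊥ → v₂ z₂ ≠ ⊥ →
      g ≤ (v₁ z₁).toReal + (v₂ z₂).toReal - t * ‖x - z₁‖ ^ 2 - t * ‖x - z₂‖ ^ 2
        + δ * ‖x‖ ^ 2 - inner ℝ a x → z₁ ∈ U ∧ z₂ ∈ U := by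
  by_contra! hcon
  have hk : ∀ k : ℕ, ∃ a x z₁ z₂ : E, ‖a‖ < 1 / ((k:ℝ) + 1) ∧ z₁ ∈ B ∧ z₂ ∈ B ∧
      v₁ z₁ ≠ ⊥ ∧ v₂ z₂ ≠ ⊥ ∧
      g ≤ (v₁ z₁).toReal + (v₂ z₂).toReal - (2 * δ + 2 + (k + 1)) * ‖x - z₁‖ ^ 2
        - (2 * δ + 2 + (k + 1)) * ‖x - z₂‖ ^ 2
        + δ * ‖x‖ ^ 2 - inner ℝ a x ∧ (z₁ ∈ U → z₂ ∉ U) := by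
    intro k
    have hk0 : (0:ℝ) ≤ k := Nat.cast_nonneg k
    exact hcon (2 * δ + 2 + (k + 1)) (1 / ((k:ℝ) + 1)) (by linarith) (by positivity)
      (by rw [div_le_one (by positivity)]; linarith)
  choose a x z w ha hz hw hzb hwb hg hnU using hk
  obtain ⟨M₁, hM₁0, hM₁⟩ := rqc_bound hB hv₁ ht₁ h0
  obtain ⟨M₂, hM₂0, hM₂⟩ := rqc_bound hB hv₂ ht₂ h0
  obtain ⟨R, hR⟩ := hB.isBounded.exists_norm_le
  have ha1 : ∀ k, ‖a k‖ ≤ 1 := fun k => (ha k).le.trans (by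
    rw [div_le_one (by positivity)]; linarith [(Nat.cast_nonneg k : (0:ℝ) ≤ k)])
  have hinner : ∀ k, - inner ℝ (a k) (x k) ≤ ‖a k‖ * ‖x k‖ := fun k => by
    rw [← inner_neg_left, ← norm_neg (a k)]
    exact real_inner_le_norm _ _
  have hxz : ∀ k, ‖x k‖ ^ 2 ≤ 2 * ‖x k - z k‖ ^ 2 + 2 * R ^ 2 := by
    intro k
    have h1 : ‖x k‖ ≤ ‖x k - z k‖ + R := by
      have := norm_add_le (x k - z k) (z k)
      rw [sub_add_cancel] at this
      linarith [hR _ (hz k)]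
    have := norm_nonneg (x k)
    nlinarith [sq_nonneg (‖x k - z k‖ - R)]
  let C := M₁ + M₂ - g + 1 + 2 * (δ + 1) * R ^ 2
  have hmain : ∀ k : ℕ, ‖x k - z k‖ ^ 2 + ‖x k - w k‖ ^ 2 ≤ C * (1 / ((k:ℝ) + 1)) := by
    intro k
    have hk0 : (0:ℝ) ≤ k := Nat.cast_nonneg k
    rw [mul_one_div, le_div_iff₀ (by positivity)]
    have h1 := hg k
    have h2 := hM₁ _ (hz k)
    have h3 := hM₂ _ (hw k)
    have h4 := hinner k
    have h5 : ‖a k‖ * ‖x k‖ ≤ ‖x k‖ ^ 2 + 1 := by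
      nlinarith [ha1 k, norm_nonneg (x k), norm_nonneg (a k), sq_nonneg (‖x k‖ - 1)]
    have h6 := hxz k
    have h7 : (δ + 1) * ‖x k‖ ^ 2 ≤ (δ + 1) * (2 * ‖x k - z k‖ ^ 2 + 2 * R ^ 2) := by gcongr
    have h8 : 0 ≤ (2 * δ + 2) * ‖x k - w k‖ ^ 2 := by positivity
    simp only [C]
    linarith
  have hlim0 : Tendsto (fun k : ℕ => C * (1 / ((k:ℝ) + 1))) atTop (nhds 0) := by
    simpa using (tendsto_one_div_add_atTop_nhds_zero_nat (𝕜 := ℝ)).const_mul C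
  have hsq : ∀ e : ℕ → E, (∀ k, ‖e k‖ ^ 2 ≤ C * (1 / ((k:ℝ) + 1))) → Tendsto e atTop (nhds 0) := by
    intro e he
    rw [tendsto_zero_iff_norm_tendsto_zero]
    have h1 : Tendsto (fun k => ‖e k‖ ^ 2) atTop (nhds 0) :=
      squeeze_zero (fun k => by positivity) he hlim0
    have h2 := h1.sqrt
    simpa [Real.sqrt_sq] using h2
  have hxz0 : Tendsto (fun k => x k - z k) atTop (nhds 0) :=
    hsq _ fun k => by have := hmain k; nlinarith [sq_nonneg ‖x k - w k‖]
  have hxw0 : Tendsto (fun k => x k - w k) atTop (nhds 0) :=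
    hsq _ fun k => by have := hmain k; nlinarith [sq_nonneg ‖x k - z k‖]
  obtain ⟨y, hy, φ, hφ, hzy⟩ := hB.tendsto_subseq hz
  have hφt := hφ.tendsto_atTop
  have hxy : Tendsto (x ∘ φ) atTop (nhds y) := by
    have := (hxz0.comp hφt).add hzy
    simpa [Function.comp_def] using this
  have hwy : Tendsto (w ∘ φ) atTop (nhds y) := by
    have := hxy.sub (hxw0.comp hφt)
    simpa [Function.comp_def] using this
  have hyU : y ∉ U := by
    intro hyU
    have e1 := hzy.eventually (hU.mem_nhds hyU)
    have e2 := hwy.eventually (hU.mem_nhds hyU)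
    obtain ⟨k, h1, h2⟩ := (e1.and e2).exists
    exact hnU (φ k) h1 h2
  obtain ⟨c, d, hc, hd, hcd⟩ := rqc_ereal_split (ht₁ y hy) (ht₂ y hy) (hS y hy hyU)
  have e1 : ∀ᶠ k in atTop, v₁ (z (φ k)) < c :=
    (tendsto_nhdsWithin_iff.mpr ⟨hzy, Eventually.of_forall fun k => hz _⟩).eventually
      (hv₁ y hy c hc)
  have e2 : ∀ᶠ k in atTop, v₂ (w (φ k)) < d :=
    (tendsto_nhdsWithin_iff.mpr ⟨hwy, Eventually.of_forall fun k => hw _⟩).eventually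
      (hv₂ y hy d hd)
  have ha0 : Tendsto (fun k => ‖a k‖) atTop (nhds 0) :=
    squeeze_zero (fun k => norm_nonneg _) (fun k => (ha k).le)
      (tendsto_one_div_add_atTop_nhds_zero_nat (𝕜 := ℝ))
  have hlim : Tendsto (fun k => c + d + δ * ‖x (φ k)‖ ^ 2 + ‖a (φ k)‖ * ‖x (φ k)‖) atTop
      (nhds (c + d + δ * ‖y‖ ^ 2 + 0 * ‖y‖)) :=
    (((hxy.norm.pow 2).const_mul δ).const_add (c + d)).add ((ha0.comp hφt).mul hxy.norm)
  have hge : g ≤ c + d + δ * ‖y‖ ^ 2 + 0 * ‖y‖ := by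
    refine ge_of_tendsto hlim ?_
    filter_upwards [e1, e2] with k h1 h2
    have h3 := hg (φ k)
    have h4 := hinner (φ k)
    rw [← EReal.coe_toReal (ht₁ _ (hz _)) (hzb _)] at h1
    rw [← EReal.coe_toReal (ht₂ _ (hw _)) (hwb _)] at h2
    have h1' := EReal.coe_lt_coe_iff.mp h1
    have h2' := EReal.coe_lt_coe_iff.mp h2
    have h5 : 0 ≤ (2 * δ + 2 + ((φ k : ℕ) + 1 : ℝ)) * ‖x (φ k) - z (φ k)‖ ^ 2 := by positivity
    have h6 : 0 ≤ (2 * δ + 2 + ((φ k : ℕ) + 1 : ℝ)) * ‖x (φ k) - w (φ k)‖ ^ 2 := by positivity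
    linarith
  linarith

/-- the conclusion extracted at one contact point -/
lemma rqc_extract {E : Type*} [NormedAddCommGroup E] [InnerProductSpace ℝ E]
    {B U : Set E} (hU : IsOpen U) (hUB : U ⊆ B) {v : E → EReal}
    (ht : ∀ z ∈ B, v z ≠ ⊤) {t c : ℝ} {f : E → ℝ}
    (hf : ∀ x, ∀ z ∈ B, v z ≠ ⊥ → (v z).toReal + t * (2 * inner ℝ x z - ‖z‖ ^ 2) ≤ f x)
    {x z p : E} (hz : z ∈ U)
    (hfx : f x = (v z).toReal + t * (2 * inner ℝ x z - ‖z‖ ^ 2)) {V : Submodule ℝ E} {s : ℝ}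
    (hs : 0 < s)
    (hk : ∀ k ∈ V, ‖k‖ < s → f (x + k) ≤ f x + inner ℝ p k + (t - c) * ‖k‖ ^ 2) :
    ∃ p : E, ∃ s > 0, ∀ k ∈ V, ‖k‖ < s →
      v (z + k) ≤ (((v z).toReal + inner ℝ p k - c * ‖k‖ ^ 2 : ℝ) : EReal) := by
  obtain ⟨s', hs', hball⟩ := Metric.isOpen_iff.mp hU z hz
  refine ⟨p - (2 * t) • x, min s s', lt_min hs hs', fun k hkV hks => ?_⟩
  have hzk : z + k ∈ B := hUB (hball (by simpa using hks.trans_le (min_le_right _ _)))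
  by_cases hb : v (z + k) = ⊥
  · rw [hb]; exact bot_le
  rw [← EReal.coe_toReal (ht _ hzk) hb, EReal.coe_le_coe_iff]
  have h1 := hf (x + k) (z + k) hzk hb
  have h2 := hk k hkV (hks.trans_le (min_le_left _ _))
  rw [norm_add_sq_real, inner_add_left, inner_add_right, inner_add_right,
    real_inner_self_eq_norm_sq] at h1
  rw [inner_sub_left, inner_smul_left]
  simp only [conj_trivial]
  rw [real_inner_comm z k] at h1
  rw [hfx] at h2
  linarith

lemma rqc_main {E : Type*} [NormedAddCommGroup E] [InnerProductSpace ℝ E]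
    [FiniteDimensional ℝ E] {q r : ℕ} (hE : Module.finrank ℝ E = q + r + 1)
    {B U : Set E} (hB : IsCompact B) (hU : IsOpen U) (hUB : U ⊆ B) (h0 : (0 : E) ∈ B)
    {v₁ v₂ : E → EReal}
    (hv₁ : UpperSemicontinuousOn v₁ B) (hv₂ : UpperSemicontinuousOn v₂ B)
    (ht₁ : ∀ z ∈ B, v₁ z ≠ ⊤) (ht₂ : ∀ z ∈ B, v₂ z ≠ ⊤)
    (hb₁ : v₁ 0 ≠ ⊥) (hb₂ : v₂ 0 ≠ ⊥) {δ : ℝ} (hδ : 0 < δ)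
    (hS : ∀ z ∈ B, z ∉ U → v₁ z + v₂ z <
      (((v₁ 0).toReal + (v₂ 0).toReal - δ * ‖z‖ ^ 2 : ℝ) : EReal)) :
    (∃ z ∈ U, v₁ z ≠ ⊥ ∧ ∃ V : Submodule ℝ E, Module.finrank ℝ V = q + 1 ∧
      ∃ p : E, ∃ s > 0, ∃ c > 0, ∀ k ∈ V, ‖k‖ < s →
      v₁ (z + k) ≤ (((v₁ z).toReal + inner ℝ p k - c * ‖k‖ ^ 2 : ℝ) : EReal)) ∨
    (∃ z ∈ U, v₂ z ≠ ⊥ ∧ ∃ V : Submodule ℝ E, Module.finrank ℝ V = r + 1 ∧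
      ∃ p : E, ∃ s > 0, ∃ c > 0, ∀ k ∈ V, ‖k‖ < s →
      v₂ (z + k) ≤ (((v₂ z).toReal + inner ℝ p k - c * ‖k‖ ^ 2 : ℝ) : EReal)) := by
  obtain ⟨t, ρ, hδt, hρ, hρ1, hpar⟩ := rqc_params hB hU h0 hv₁ hv₂ ht₁ ht₂ hδ hS
  obtain ⟨f₁, hf₁c, hf₁e, hf₁⟩ := rqc_supconv hB hv₁ ht₁ h0 hb₁ t
  obtain ⟨f₂, hf₂c, hf₂e, hf₂⟩ := rqc_supconv hB hv₂ ht₂ h0 hb₂ t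
  obtain ⟨M₁, hM₁0, hM₁⟩ := rqc_bound hB hv₁ ht₁ h0
  obtain ⟨M₂, hM₂0, hM₂⟩ := rqc_bound hB hv₂ ht₂ h0
  obtain ⟨R, hR⟩ := hB.isBounded.exists_norm_le
  have hR0 : 0 ≤ R := by simpa using hR 0 h0
  have ht0 : 0 < t := hδ.trans hδt
  have hκ : 0 < 2 * t - δ := by linarith
  have hgrow : ∀ x z : E, z ∈ B → t * (2 * inner ℝ x z - ‖z‖ ^ 2) ≤ 2 * t * R * ‖x‖ := by
    intro x z hz
    have h1 := real_inner_le_norm x z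
    have h2 : ‖x‖ * ‖z‖ ≤ ‖x‖ * R := by gcongr; exact hR z hz
    have h3 : 2 * inner ℝ x z - ‖z‖ ^ 2 ≤ 2 * R * ‖x‖ := by nlinarith [sq_nonneg ‖z‖]
    nlinarith
  have hmax : ∀ a : E, ‖a‖ < ρ → ∃ x, ∀ y, f₁ y + f₂ y - (2 * t - δ) * ‖y‖ ^ 2 - inner ℝ a y
      ≤ f₁ x + f₂ x - (2 * t - δ) * ‖x‖ ^ 2 - inner ℝ a x := by
    intro a ha
    have hc₁ := hf₁c.locallyLipschitz.continuous
    have hc₂ := hf₂c.locallyLipschitz.continuous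
    have hcont : Continuous (fun y => f₁ y + f₂ y - (2 * t - δ) * ‖y‖ ^ 2 - inner ℝ a y) := by
      fun_prop
    refine hcont.exists_forall_ge' 0 ?_
    let D := |M₁ + M₂ - f₁ 0 - f₂ 0|
    let c := 4 * t * R + 1
    filter_upwards [(tendsto_norm_cocompact_atTop (E := E)).eventually_ge_atTop 1,
      (tendsto_norm_cocompact_atTop (E := E)).eventually_ge_atTop ((c + D) / (2 * t - δ))]
      with y h1 h2
    obtain ⟨z, hz, hzb, hze⟩ := hf₁e y
    obtain ⟨w, hw, hwb, hwe⟩ := hf₂e y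
    have g1 := hgrow y z hz
    have g2 := hgrow y w hw
    have g3 := hM₁ z hz
    have g4 := hM₂ w hw
    have g5 : - inner ℝ a y ≤ ‖y‖ := by
      have := real_inner_le_norm (-a) y
      rw [inner_neg_left, norm_neg] at this
      nlinarith [norm_nonneg y]
    rw [div_le_iff₀ hκ] at h2
    have g6 : D ≤ ‖y‖ * (‖y‖ * (2 * t - δ) - c) := by
      have : 0 ≤ D := abs_nonneg _
      nlinarith
    have g7 : M₁ + M₂ - f₁ 0 - f₂ 0 ≤ D := le_abs_self _
    simp only [norm_zero, inner_zero_right]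
    rw [hze, hwe]
    simp only [c] at g6
    nlinarith
  obtain ⟨x, a, p₁, p₂, A, ha, hxmax, hexp⟩ := rqc_core hf₁c hf₂c hκ hρ hmax
  obtain ⟨z, hz, hzb, hze⟩ := hf₁e x
  obtain ⟨w, hw, hwb, hwe⟩ := hf₂e x
  have hge : (v₁ 0).toReal + (v₂ 0).toReal ≤ (v₁ z).toReal + (v₂ w).toReal
      - t * ‖x - z‖ ^ 2 - t * ‖x - w‖ ^ 2 + δ * ‖x‖ ^ 2 - inner ℝ a x := by
    have h1 := hf₁ 0 0 h0 hb₁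
    have h2 := hf₂ 0 0 h0 hb₂
    have h3 := hxmax 0
    simp at h1 h2 h3
    rw [norm_sub_sq_real, norm_sub_sq_real]
    rw [hze, hwe] at h3
    linarith
  obtain ⟨hzU, hwU⟩ := hpar a x z w ha hz hw hzb hwb hge
  obtain ⟨s, hs, hsk⟩ := hexp (δ / 4) (by positivity)
  rcases rqc_linalg hE A (t - δ / 2) with ⟨V, hV, hVk⟩ | ⟨V, hV, hVk⟩
  · left
    obtain ⟨p, s', hs', h⟩ := rqc_extract (c := δ / 4) (p := p₁) hU hUB ht₁ hf₁ hzU hze (V := V)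
      hs (fun k hk hks => by
        have h1 := (hsk k hks).1
        have h2 := hVk k hk
        linarith)
    exact ⟨z, hzU, hzb, V, hV, p, s', hs', δ / 4, by positivity, h⟩
  · right
    obtain ⟨p, s', hs', h⟩ := rqc_extract (c := δ / 4) (p := p₂) hU hUB ht₂ hf₂ hwU hwe (V := V)
      hs (fun k hk hks => by
        have h1 := (hsk k hks).2
        have h2 := hVk k hk
        linarith)
    exact ⟨w, hwU, hwb, V, hV, p, s', hs', δ / 4, by positivity, h⟩

/-- A real q-convex function cannot be touched from above, along a `(q+1)`-plane, by a strictly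
concave paraboloid (up to an affine function). -/
lemma rqc_refute {F : Type*} [NormedAddCommGroup F] [InnerProductSpace ℝ F]
    {q : ℕ} {u : F → EReal} {ω : Set F} (hω : IsOpen ω) (hu : RealQConvexOn q u ω)
    (l : F →ᵃ[ℝ] ℝ) (W : Submodule ℝ F) (y₀ : F) (z : W) (hz : y₀ + z ∈ ω)
    (V : Submodule ℝ W) (hV : Module.finrank ℝ V = q + 1) {p : W} {s c : ℝ} (hs : 0 < s)
    (hc : 0 < c)
    (hb : u (y₀ + z) + ((l (y₀ + z) : ℝ) : EReal) ≠ ⊥)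
    (h : ∀ k ∈ V, ‖k‖ < s → u (y₀ + (z + k : W)) + ((l (y₀ + (z + k : W)) : ℝ) : EReal) ≤
      (((u (y₀ + z) + ((l (y₀ + z) : ℝ) : EReal)).toReal + inner ℝ p k - c * ‖k‖ ^ 2 : ℝ) :
        EReal)) : False := by
  set y : F := y₀ + z with hy
  have hub : u y ≠ ⊥ := fun h => hb (by rw [h, EReal.bot_add])
  have hut : u y ≠ ⊤ := hu.1 y hz
  set g := (u y).toReal with hgdef
  have hg : u y = (g : EReal) := (EReal.coe_toReal hut hub).symm
  obtain ⟨s₁, hs₁, hball⟩ := Metric.isOpen_iff.mp hω y hz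
  let s₂ := min s s₁ / 2
  have hs₂ : 0 < s₂ := by have := lt_min hs hs₁; simp only [s₂]; linarith
  have hs₂s : s₂ < s := by have := lt_min hs hs₁; have := min_le_left s s₁; simp only [s₂]; linarith
  have hs₂s₁ : s₂ < s₁ := by
    have := lt_min hs hs₁; have := min_le_right s s₁; simp only [s₂]; linarith
  let P : AffineSubspace ℝ F := AffineSubspace.mk' y (V.map W.subtype)
  have hP : Module.finrank ℝ P.direction = q + 1 := by
    rw [AffineSubspace.direction_mk', ← hV]
    exact LinearEquiv.finrank_eq (Submodule.equivMapOfInjective W.subtype W.injective_subtype V).symm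
  let l' : F →ᵃ[ℝ] ℝ := (innerSL ℝ (p : F)).toLinearMap.toAffineMap - l +
    AffineMap.const ℝ F (g + l y - inner ℝ (p : F) y - c * s₂ ^ 2)
  have hl' : ∀ x, l' x = inner ℝ (p : F) (x - y) - l x + g + l y - c * s₂ ^ 2 := by
    intro x
    simp [l', inner_sub_right]
    ring
  have hkey := hu.2.2 P hP y s₂ hs₂
    (closure_ball_subset_closedBall.trans ((closedBall_subset_ball hs₂s₁).trans hball)) l' ?_ y
    ⟨by simp [hs₂.le], AffineSubspace.self_mem_mk' _ _⟩
  · rw [hg, EReal.coe_le_coe_iff, hl', sub_self, inner_zero_right] at hkey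
    have : 0 < c * s₂ ^ 2 := by positivity
    linarith
  · rintro x ⟨hxs, hxP⟩
    have hxP' : x ∈ AffineSubspace.mk' y (V.map W.subtype) := hxP
    rw [AffineSubspace.mem_mk', vsub_eq_sub] at hxP'
    obtain ⟨k, hk, hkx⟩ := hxP'
    have hkx' : (k : F) = x - y := hkx
    have hxe : x = y₀ + (z + k : W) := by
      rw [Submodule.coe_add, hkx', hy]; abel
    have hkn : ‖k‖ = s₂ := by
      have hkk : ‖k‖ = ‖(k : F)‖ := rfl
      rw [hkk, hkx']
      simpa [dist_eq_norm] using hxs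
    have h1 := h k hk (by rw [hkn]; exact hs₂s)
    rw [← hxe, hkn, hg, ← EReal.coe_add, EReal.toReal_coe] at h1
    by_cases hxb : u x = ⊥
    · rw [hxb]; exact bot_le
    have hxω : x ∈ ω := hball (by
      have hkk : ‖(k : F)‖ = ‖k‖ := rfl
      rw [mem_ball, dist_eq_norm, ← hkx', hkk, hkn]; exact hs₂s₁)
    rw [← EReal.coe_toReal (hu.1 x hxω) hxb, ← EReal.coe_add, EReal.coe_le_coe_iff] at h1
    rw [← EReal.coe_toReal (hu.1 x hxω) hxb, EReal.coe_le_coe_iff, hl', ← hkx']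
    have : inner ℝ p k = inner ℝ (p : F) (k : F) := rfl
    linarith

/-- The sum of a real q-convex function and a real r-convex function on `ω ⊆ ℝⁿ`
is real (q+r)-convex on `ω`. -/
lemma rqc_add {F : Type*} [NormedAddCommGroup F] [InnerProductSpace ℝ F]
    [FiniteDimensional ℝ F] {q r : ℕ}
    (ω : Set (F)) (hω : IsOpen ω)
    (u₁ u₂ : F → EReal)
    (h₁ : RealQConvexOn q u₁ ω) (h₂ : RealQConvexOn r u₂ ω) :
    RealQConvexOn (q + r) (fun x => u₁ x + u₂ x) ω := by
  refine ⟨fun x hx => ?_, ?_, ?_⟩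
  · exact EReal.add_ne_top (h₁.1 x hx) (h₂.1 x hx)
  · apply h₁.2.1.add' h₂.2.1
    intro x hx
    exact EReal.continuousAt_add (Or.inl (h₁.1 x hx)) (Or.inr (h₂.1 x hx))
  intro P hP c ρ hρ hball l hl y₀ hy₀
  by_contra! hlt
  have hcb : closedBall c ρ ⊆ ω := by rwa [closure_ball c hρ.ne'] at hball
  let W : Submodule ℝ F := P.direction
  let ι : W → F := fun x => y₀ + x
  have hι : Continuous ι := by fun_prop
  have hιP : ∀ x, ι x ∈ P := fun x => by
    have := AffineSubspace.vadd_mem_of_mem_direction x.2 hy₀.2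
    rwa [vadd_eq_add, add_comm] at this
  let B : Set W := ι ⁻¹' closedBall c ρ
  let U : Set W := ι ⁻¹' ball c ρ
  have hBn : ∀ z ∈ B, ‖z‖ ≤ 2 * ρ := by
    intro z hz
    have h1 : ‖ι z - c‖ ≤ ρ := by simpa [dist_eq_norm] using mem_closedBall.mp hz
    have h2 : ‖y₀ - c‖ ≤ ρ := by simpa [dist_eq_norm] using mem_closedBall.mp hy₀.1
    have h3 : (z : F) = (ι z - c) - (y₀ - c) := by simp [ι]
    have hzz : ‖z‖ = ‖(z : F)‖ := rfl
    rw [hzz, h3]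
    exact (norm_sub_le _ _).trans (by linarith)
  have hBc : IsCompact B := by
    apply Metric.isCompact_of_isClosed_isBounded (isClosed_closedBall.preimage hι)
    exact isBounded_iff_forall_norm_le.mpr ⟨_, hBn⟩
  have hU : IsOpen U := isOpen_ball.preimage hι
  have hUB : U ⊆ B := preimage_mono ball_subset_closedBall
  have h0 : (0 : W) ∈ B := by
    change ι 0 ∈ closedBall c ρ
    simpa [ι] using hy₀.1
  have hι0 : ι 0 = y₀ := by simp [ι]
  let z0 : F →ᵃ[ℝ] ℝ := 0
  let v₁ : W → EReal := fun x => u₁ (y₀ + x) + ((z0 (y₀ + x) : ℝ) : EReal)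
  let v₂ : W → EReal := fun x => u₂ (y₀ + x) + (((-l) (y₀ + x) : ℝ) : EReal)
  have husc : ∀ {m : ℕ} {u : F → EReal} (hu : RealQConvexOn m u ω)
      (l' : F →ᵃ[ℝ] ℝ),
      UpperSemicontinuousOn (fun x : W => u (y₀ + x) + ((l' (y₀ + x) : ℝ) : EReal)) B := by
    intro m u hu l'
    have hc : Continuous (fun x : W => ((l' (y₀ + x) : ℝ) : EReal)) := by
      apply continuous_coe_real_ereal.comp
      exact l'.continuous_of_finiteDimensional.comp hι
    have h1 : UpperSemicontinuousOn (fun x : W => u (y₀ + x)) B := by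
      intro x hx t ht
      have h2 := hu.2.1 (ι x) (hcb hx) t ht
      have h3 : Tendsto ι (nhdsWithin x B) (nhdsWithin (ι x) ω) :=
        tendsto_nhdsWithin_iff.mpr ⟨hι.continuousAt.mono_left nhdsWithin_le_nhds,
          eventually_nhdsWithin_of_forall fun z hz => hcb hz⟩
      exact h3.eventually h2
    apply h1.add' hc.continuousOn.upperSemicontinuousOn
    intro z hz
    exact EReal.continuousAt_add (Or.inr (EReal.coe_ne_bot _)) (Or.inr (EReal.coe_ne_top _))
  have htop : ∀ {m : ℕ} {u : F → EReal} (hu : RealQConvexOn m u ω)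
      (l' : F →ᵃ[ℝ] ℝ), ∀ z ∈ B,
      (fun x : W => u (y₀ + x) + ((l' (y₀ + x) : ℝ) : EReal)) z ≠ ⊤ := fun hu l' z hz =>
    EReal.add_ne_top (hu.1 _ (hcb hz)) (EReal.coe_ne_top _)
  have hlt' : ((l y₀ : ℝ) : EReal) < u₁ y₀ + u₂ y₀ := hlt
  have hb₁ : u₁ y₀ ≠ ⊥ := by rintro h; rw [h, EReal.bot_add] at hlt'; exact not_lt_bot hlt'
  have hb₂ : u₂ y₀ ≠ ⊥ := by rintro h; rw [h, EReal.add_bot] at hlt'; exact not_lt_bot hlt'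
  obtain ⟨g₁, hg₁⟩ : ∃ g : ℝ, u₁ y₀ = g := ⟨_, (EReal.coe_toReal (h₁.1 _ (hcb hy₀.1)) hb₁).symm⟩
  obtain ⟨g₂, hg₂⟩ : ∃ g : ℝ, u₂ y₀ = g := ⟨_, (EReal.coe_toReal (h₂.1 _ (hcb hy₀.1)) hb₂).symm⟩
  rw [hg₁, hg₂] at hlt'
  have hgap : l y₀ < g₁ + g₂ := by exact_mod_cast hlt'
  have hv₁0 : v₁ 0 = (g₁ : EReal) := by simp [v₁, z0, hg₁]
  have hv₂0 : v₂ 0 = ((g₂ - l y₀ : ℝ) : EReal) := by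
    simp only [v₂, Submodule.coe_zero, add_zero, hg₂]
    rw [← EReal.coe_add]
    simp [sub_eq_add_neg]
  let δ := (g₁ + g₂ - l y₀) / (8 * ρ ^ 2)
  have hδ : 0 < δ := by
    apply div_pos <;> [linarith; positivity]
  have hSb : ∀ z ∈ B, z ∉ U → v₁ z + v₂ z <
      (((v₁ 0).toReal + (v₂ 0).toReal - δ * ‖z‖ ^ 2 : ℝ) : EReal) := by
    intro z hz hzU
    have hsph : ι z ∈ sphere c ρ := by
      rw [mem_sphere]
      exact le_antisymm hz (not_lt.mp hzU)
    have h1 : u₁ (ι z) + u₂ (ι z) ≤ (l (ι z) : EReal) := hl (ι z) ⟨hsph, hιP z⟩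
    have h2 : v₁ z + v₂ z ≤ 0 := by
      have e : v₁ z + v₂ z = u₁ (ι z) + u₂ (ι z) + ((-l (ι z) : ℝ) : EReal) := by
        simp [v₁, v₂, z0, ι, add_assoc]
      rw [e]
      refine (add_le_add_left h1 _).trans ?_
      rw [← EReal.coe_add]; simp
    refine h2.trans_lt ?_
    rw [hv₁0, hv₂0, EReal.toReal_coe, EReal.toReal_coe]
    have h3 : δ * ‖z‖ ^ 2 ≤ δ * (2 * ρ) ^ 2 := by gcongr; exact hBn z hz
    have h4 : δ * (2 * ρ) ^ 2 = (g₁ + g₂ - l y₀) / 2 := by simp only [δ]; field_simp; ring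
    exact_mod_cast (by linarith : (0:ℝ) < g₁ + (g₂ - l y₀) - δ * ‖z‖ ^ 2)
  rcases rqc_main (v₁ := v₁) (v₂ := v₂) hP hBc hU hUB h0 (husc h₁ z0) (husc h₂ (-l)) (htop h₁ z0)
    (htop h₂ (-l)) (by rw [hv₁0]; exact EReal.coe_ne_bot _)
    (by rw [hv₂0]; exact EReal.coe_ne_bot _) hδ hSb with
    ⟨z, hz, hzb, V, hV, p, s, hs, d, hd, hk⟩ | ⟨z, hz, hzb, V, hV, p, s, hs, d, hd, hk⟩
  · exact rqc_refute hω h₁ z0 W y₀ z (hcb (hUB hz)) V hV hs hd hzb hk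
  · exact rqc_refute hω h₂ (-l) W y₀ z (hcb (hUB hz)) V hV hs hd hzb hk

/-- The sum of a real q-convex function and a real r-convex function on `ω ⊆ ℝⁿ`
is real (q+r)-convex on `ω`. -/
theorem realQConvexOn_add {n q r : ℕ}
    (ω : Set (EuclideanSpace ℝ (Fin n))) (hω : IsOpen ω)
    (u₁ u₂ : EuclideanSpace ℝ (Fin n) → EReal)
    (h₁ : RealQConvexOn q u₁ ω) (h₂ : RealQConvexOn r u₂ ω) :
    RealQConvexOn (q + r) (fun x => u₁ x + u₂ x) ω := by
  exact rqc_add ω hω u₁ u₂ h₁ h₂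
end
end

section
/- Let Ω be an open subset of ℂⁿ, identified with an open subset of ℝ²ⁿ via z = x + iy ↦ (x,y), and let q ∈ {0,…,2n−1}. Then every function u : Ω → [−∞,+∞) that is real q-convex on Ω (as a subset of ℝ²ⁿ) is q-plurisubharmonic on Ω. -/
open Metric Set Filter

noncomputable section

/-- A real-valued function is *pluriharmonic* on an open set `U` if it is locally
the real part of a holomorphic function. -/
def Pluriharmonic {E : Type*} [NormedAddCommGroup E] [NormedSpace ℂ E]
    (h : E → ℝ) (U : Set E) : Prop :=
  ∀ x ∈ U, ∃ V, IsOpen V ∧ x ∈ V ∧ V ⊆ U ∧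
    ∃ F : E → ℂ, DifferentiableOn ℂ F V ∧ ∀ y ∈ V, h y = (F y).re

/-- An upper semicontinuous function `ψ : Ω → [−∞,+∞)` is *q-plurisubharmonic*
(in the sense of Hunt–Murray) if it satisfies the local maximum property with respect
to pluriharmonic functions on complex `(q+1)`-dimensional affine subspaces. -/
def QPlurisubharmonicOn {E : Type*} [NormedAddCommGroup E] [NormedSpace ℂ E]
    (q : ℕ) (ψ : E → EReal) (Ω : Set E) : Prop :=
  (∀ z ∈ Ω, ψ z ≠ ⊤) ∧ UpperSemicontinuousOn ψ Ω ∧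
    ∀ P : AffineSubspace ℂ E, Module.finrank ℂ P.direction = q + 1 →
      ∀ (c : E) (r : ℝ), 0 < r → closure (Metric.ball c r) ⊆ Ω →
        ∀ (h : E → ℝ) (U : Set E), IsOpen U → closure (Metric.ball c r) ⊆ U →
          Pluriharmonic h U →
          (∀ z ∈ Metric.sphere c r ∩ (P : Set E), ψ z ≤ (h z : EReal)) →
          ∀ z ∈ Metric.closedBall c r ∩ (P : Set E), ψ z ≤ (h z : EReal)

open scoped Topology

theorem hol_fderiv_apply_differentiableAt {E : Type*} [NormedAddCommGroup E] [NormedSpace ℂ E]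
    [FiniteDimensional ℂ E] {F : E → ℂ} {V : Set E} (hV : IsOpen V)
    (hF : DifferentiableOn ℂ F V) {p : E} (hp : p ∈ V) (v : E) :
    DifferentiableAt ℂ (fun z => fderiv ℂ F z v) p := by
  let : MeasurableSpace E := borel E
  have : BorelSpace E := ⟨rfl⟩
  have : ProperSpace E := FiniteDimensional.proper ℂ E
  -- a ball where everything is nice and bounded
  obtain ⟨R, hR, hRV, C, hC0, hC⟩ : ∃ R > 0, ball p R ⊆ V ∧ ∃ C > 0, ∀ z ∈ ball p R, ‖F z‖ < C := by
    obtain ⟨R1, hR1, h1⟩ := Metric.isOpen_iff.1 hV p hp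
    have hc : ContinuousAt F p := (hF.differentiableAt (hV.mem_nhds hp)).continuousAt
    have : ∀ᶠ z in 𝓝 p, ‖F z‖ < ‖F p‖ + 1 := hc.norm.eventually_lt_const (by linarith)
    obtain ⟨R2, hR2, h2⟩ := Metric.eventually_nhds_iff_ball.1 this
    exact ⟨min R1 R2, lt_min hR1 hR2, (ball_subset_ball (min_le_left _ _)).trans h1,
      ‖F p‖ + 1, by positivity, fun z hz => h2 z (ball_subset_ball (min_le_right _ _) hz)⟩
  obtain ⟨s, hs, hsv⟩ : ∃ s > 0, s * ‖v‖ < R / 4 := by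
    refine ⟨R / 4 / (‖v‖ + 1), by positivity, ?_⟩
    rw [div_mul_eq_mul_div, div_lt_iff₀ (by positivity)]
    nlinarith [norm_nonneg v]
  have hball : ∀ z ∈ ball p (R/4), ∀ ζ : ℂ, ‖ζ‖ ≤ s → z + ζ • v ∈ ball p (R/2) := by
    intro z hz ζ hζ
    rw [mem_ball_iff_norm] at hz ⊢
    calc ‖z + ζ • v - p‖ = ‖(z - p) + ζ • v‖ := by congr 1; abel
      _ ≤ ‖z - p‖ + ‖ζ‖ * ‖v‖ := by rw [← norm_smul]; exact norm_add_le _ _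
      _ ≤ ‖z - p‖ + s * ‖v‖ := by gcongr
      _ < R/2 := by linarith
  have hsub : ball p (R/2) ⊆ ball p R := ball_subset_ball (by linarith)
  have hdiff : ∀ z ∈ ball p R, DifferentiableAt ℂ F z := fun z hz =>
    hF.differentiableAt (hV.mem_nhds (hRV hz))
  have hbound : ∀ z ∈ ball p (R/2), ‖fderiv ℂ F z‖ ≤ (2 * C) / (R/2) := by
    intro z hz
    have hs2 : ball z (R/2) ⊆ ball p R := ball_subset_ball' (by rw [mem_ball] at hz; linarith)
    refine Complex.norm_fderiv_le_div_of_mapsTo_ball (fun w hw =>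
      (hdiff w (hs2 hw)).differentiableWithinAt) (fun w hw => ?_) (by linarith)
    rw [mem_closedBall_iff_norm]
    calc ‖F w - F z‖ ≤ ‖F w‖ + ‖F z‖ := norm_sub_le _ _
      _ ≤ 2 * C := by linarith [hC w (hs2 hw), hC z (hsub hz)]
  -- Cauchy formula
  have hcauchy : ∀ z ∈ ball p (R/4), fderiv ℂ F z v =
      (2 * Real.pi * Complex.I : ℂ)⁻¹ • ∮ ζ in C(0, s), ((ζ - 0) ^ 2)⁻¹ • F (z + ζ • v) := by
    intro z hz
    have hzR : z ∈ ball p R := ball_subset_ball (by linarith) hz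
    let U : Set ℂ := (fun ζ : ℂ => z + ζ • v) ⁻¹' (ball p R)
    have hU : IsOpen U := isOpen_ball.preimage (by fun_prop)
    have := Complex.two_pi_I_inv_smul_circleIntegral_sub_sq_inv_smul_of_differentiable
      (f := fun ζ : ℂ => F (z + ζ • v)) (c := 0) (w₀ := 0) (R := s) hU
      (fun ζ hζ => hsub (hball z hz ζ (by simpa using hζ)))
      (fun ζ hζ => ((hdiff _ hζ).comp ζ (by fun_prop)).differentiableWithinAt)
      (mem_ball_self hs)
    rw [this]
    have h1 : HasDerivAt (fun ζ : ℂ => z + ζ • v) v 0 := by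
      simpa using ((hasDerivAt_id (0:ℂ)).smul_const v).const_add z
    have h2 : HasFDerivAt F (fderiv ℂ F z) (z + (0:ℂ) • v) := by
      simpa using (hdiff z hzR).hasFDerivAt
    exact (h2.comp_hasDerivAt (0:ℂ) h1).deriv.symm
  have hev : (fun z => fderiv ℂ F z v) =ᶠ[𝓝 p] fun z =>
      (2 * Real.pi * Complex.I : ℂ)⁻¹ • ∮ ζ in C(0, s), ((ζ - 0) ^ 2)⁻¹ • F (z + ζ • v) :=
    Filter.eventually_of_mem (ball_mem_nhds p (by linarith)) hcauchy
  refine DifferentiableAt.congr_of_eventuallyEq ?_ hev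
  refine DifferentiableAt.fun_const_smul ?_ _
  unfold circleIntegral
  have hcm : ∀ θ : ℝ, ‖circleMap 0 s θ‖ ≤ s := by
    intro θ; simp [abs_of_pos hs]
  have hcont : ∀ z ∈ ball p (R/4), Continuous fun θ : ℝ => deriv (circleMap 0 s) θ •
      ((circleMap 0 s θ - 0) ^ 2)⁻¹ • F (z + circleMap 0 s θ • v) := by
    intro z hz
    have h1 : Continuous fun θ : ℝ => F (z + circleMap 0 s θ • v) := by
      rw [continuous_iff_continuousAt]
      intro θ
      exact ContinuousAt.comp (g := F) (hdiff _ (hsub (hball z hz _ (hcm θ)))).continuousAt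
        (by fun_prop)
    have h2 : Continuous fun θ : ℝ => ((circleMap 0 s θ - 0) ^ 2)⁻¹ := by
      refine Continuous.inv₀ (by fun_prop) fun θ => ?_
      simpa using hs.ne'
    have h3 : Continuous fun θ : ℝ => deriv (circleMap 0 s) θ := by
      simp only [deriv_circleMap]; fun_prop
    exact h3.smul (h2.smul h1)
  refine HasFDerivAt.differentiableAt (intervalIntegral.hasFDerivAt_integral_of_dominated_of_fderiv_le
    (s := ball p (R/4)) (bound := fun _ => s * ((s^2)⁻¹ * ((2 * C) / (R/2))))
    (F' := fun z θ => deriv (circleMap 0 s) θ • ((circleMap 0 s θ - 0) ^ 2)⁻¹ •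
      fderiv ℂ F (z + circleMap 0 s θ • v))
    (ball_mem_nhds p (by linarith)) ?_ ?_ ?_ ?_ ?_ ?_)
  · exact Filter.eventually_of_mem (ball_mem_nhds p (by linarith : (0:ℝ) < R/4))
      fun z hz => (hcont z hz).aestronglyMeasurable
  · exact (hcont p (mem_ball_self (by linarith))).intervalIntegrable _ _
  · have h2 : Continuous fun θ : ℝ => ((circleMap 0 s θ - 0) ^ 2)⁻¹ := by
      refine Continuous.inv₀ (by fun_prop) fun θ => ?_
      simpa using hs.ne'
    have h3 : Continuous fun θ : ℝ => deriv (circleMap 0 s) θ := by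
      simp only [deriv_circleMap]; fun_prop
    have h4 : Measurable fun θ : ℝ => fderiv ℂ F (p + circleMap 0 s θ • v) :=
      (measurable_fderiv ℂ F).comp (by
        have : Continuous fun θ : ℝ => p + circleMap 0 s θ • v := by fun_prop
        exact this.measurable)
    exact h3.aestronglyMeasurable.smul (h2.aestronglyMeasurable.smul h4.aestronglyMeasurable)
  · refine Filter.Eventually.of_forall fun θ _ z hz => ?_
    rw [norm_smul, norm_smul]
    have := hbound _ (hball z hz _ (hcm θ))
    have e1 : ‖deriv (circleMap 0 s) θ‖ = s := by simp [abs_of_pos hs]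
    have e2 : ‖((circleMap 0 s θ - 0) ^ 2)⁻¹‖ = (s^2)⁻¹ := by simp
    rw [e1, e2]
    gcongr
  · exact continuous_const.intervalIntegrable _ _
  · refine Filter.Eventually.of_forall fun θ _ z hz => ?_
    have h0 : HasFDerivAt (fun x => F (x + circleMap 0 s θ • v))
        (fderiv ℂ F (z + circleMap 0 s θ • v)) z :=
      ((hdiff _ (hsub (hball z hz _ (hcm θ)))).hasFDerivAt.comp z
        ((hasFDerivAt_id z).add_const (circleMap 0 s θ • v))).congr_fderiv
        (by ext w; simp)
    exact (h0.fun_const_smul (((circleMap 0 s θ - 0) ^ 2)⁻¹)).fun_const_smul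
      (deriv (circleMap 0 s) θ)

theorem hol_fderiv_differentiableAt {E : Type*} [NormedAddCommGroup E] [NormedSpace ℂ E]
    [FiniteDimensional ℂ E] {F : E → ℂ} {V : Set E} (hV : IsOpen V)
    (hF : DifferentiableOn ℂ F V) {p : E} (hp : p ∈ V) :
    DifferentiableAt ℂ (fderiv ℂ F) p := by
  let b := Module.finBasis ℂ E
  have h : fderiv ℂ F = fun z => ∑ i, fderiv ℂ F z (b i) •
      (LinearMap.toContinuousLinearMap (b.coord i) : E →L[ℂ] ℂ) := by
    funext z
    ext w
    conv_lhs => rw [← b.sum_repr w]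
    simp only [map_sum, map_smul]
    simp [mul_comm]
  rw [h]
  refine DifferentiableAt.fun_sum fun i _ => ?_
  exact (hol_fderiv_apply_differentiableAt hV hF hp (b i)).smul_const _

/-- second-order Taylor expansion. -/
theorem hol_taylor_two {E : Type*} [NormedAddCommGroup E] [NormedSpace ℂ E]
    [FiniteDimensional ℂ E] {F : E → ℂ} {V : Set E} (hV : IsOpen V)
    (hF : DifferentiableOn ℂ F V) {p : E} (hp : p ∈ V) :
    ∃ (A : E →L[ℂ] ℂ) (B : E →L[ℂ] E →L[ℂ] ℂ), (∀ v w, B v w = B w v) ∧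
      ∀ ε > 0, ∀ᶠ z in 𝓝 p,
        ‖F z - F p - A (z - p) - (1/2 : ℂ) * B (z - p) (z - p)‖ ≤ ε * ‖z - p‖^2 := by
  have hd := (hol_fderiv_differentiableAt hV hF hp).hasFDerivAt
  set B := fderiv ℂ (fderiv ℂ F) p
  have hev : ∀ᶠ z in 𝓝 p, HasFDerivAt F (fderiv ℂ F z) z :=
    Filter.eventually_of_mem (hV.mem_nhds hp) fun z hz =>
      (hF.differentiableAt (hV.mem_nhds hz)).hasFDerivAt
  have hsymm : ∀ v w, B v w = B w v := fun v w =>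
    second_derivative_symmetric_of_eventually hev hd v w
  refine ⟨fderiv ℂ F p, B, hsymm, fun ε hε => ?_⟩
  obtain ⟨r1, hr1, h1⟩ := Metric.eventually_nhds_iff_ball.1 hev
  obtain ⟨r2, hr2, h2⟩ := Metric.eventually_nhds_iff_ball.1 (hd.isLittleO.def hε)
  refine Metric.eventually_nhds_iff_ball.2 ⟨min r1 r2, lt_min hr1 hr2, fun z hz => ?_⟩
  let : NormedSpace ℝ E := NormedSpace.complexToReal
  have hG : ∀ y ∈ closedBall p ‖z - p‖, HasFDerivWithinAt
      (fun y => F y - F p - fderiv ℂ F p (y - p) - (1/2 : ℂ) * B (y - p) (y - p))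
      (fderiv ℂ F y - fderiv ℂ F p - B (y - p)) (closedBall p ‖z - p‖) y := by
    intro y hy
    have hy1 : y ∈ ball p r1 := by
      rw [mem_closedBall] at hy; rw [mem_ball, dist_eq_norm] at hz
      exact mem_ball.2 (hy.trans_lt (hz.trans_le (min_le_left _ _)))
    refine HasFDerivAt.hasFDerivWithinAt ?_
    have hs : HasFDerivAt (fun y : E => y - p) (ContinuousLinearMap.id ℂ E) y :=
      (hasFDerivAt_id y).sub_const p
    have hq := ((B.hasFDerivAt.comp y hs).clm_apply hs).const_mul (1/2 : ℂ)
    have hl := (fderiv ℂ F p).hasFDerivAt.comp y hs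
    refine ((((h1 y hy1).sub_const (F p)).sub hl).sub hq).congr_fderiv ?_
    ext w
    have e := hsymm w (y - p)
    simp at e ⊢
    linear_combination (1/2 : ℂ) * e
  have := (convex_closedBall p ‖z - p‖).norm_image_sub_le_of_norm_hasFDerivWithin_le
    (C := ε * ‖z - p‖) hG (fun y hy => ?_) (x := p) (y := z) (by simp) (by simp [dist_eq_norm])
  · simpa [pow_two, mul_assoc] using this
  · have hy2 : y ∈ ball p r2 := by
      rw [mem_closedBall] at hy; rw [mem_ball, dist_eq_norm] at hz
      exact mem_ball.2 (hy.trans_lt (hz.trans_le (min_le_right _ _)))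
    refine (h2 y hy2).trans ?_
    gcongr
    simpa [dist_eq_norm] using hy

theorem exists_real_neg_subspace {E : Type*} [AddCommGroup E] [Module ℂ E] [Module ℝ E]
    [IsScalarTower ℝ ℂ E]
    (B : LinearMap.BilinForm ℂ E) (hB : ∀ v w, B v w = B w v) (W : Submodule ℂ E)
    [FiniteDimensional ℂ W] :
    ∃ L : Submodule ℝ E, Module.finrank ℝ L = Module.finrank ℂ W ∧ (∀ v ∈ L, v ∈ W) ∧
      ∀ v ∈ L, (B v v).re ≤ 0 := by
  have hsym : LinearMap.IsSymm (B.restrict W) := ⟨fun v w => by simpa using hB v w⟩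
  let _ : Invertible (2:ℂ) := invertibleOfNonzero two_ne_zero
  obtain ⟨b, hb⟩ := LinearMap.BilinForm.exists_orthogonal_basis hsym
  have hc : ∀ i, ∃ c : ℂˣ, ((c : ℂ) * c * B (b i) (b i)).re ≤ 0 := by
    intro i
    by_cases h0 : B (b i) (b i) = 0
    · exact ⟨1, by simp [h0]⟩
    · obtain ⟨c, hc⟩ := IsAlgClosed.exists_eq_mul_self (-(B (b i) (b i))⁻¹)
      have hc0 : c ≠ 0 := by
        rintro rfl
        simp [h0] at hc
      refine ⟨Units.mk0 c hc0, ?_⟩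
      rw [Units.val_mk0, ← hc]
      simp [h0]
  choose c hc using hc
  have hli : LinearIndependent ℂ (fun i => (b i : E)) :=
    b.linearIndependent.map' W.subtype (by simp)
  have hli2 : LinearIndependent ℝ (c • (fun i => (b i : E))) :=
    (hli.units_smul c).restrict_scalars (by
      intro x y h
      simpa using h)
  refine ⟨Submodule.span ℝ (range (c • (fun i => (b i : E)))), ?_, ?_, ?_⟩
  · rw [finrank_span_eq_card hli2]; simp
  · intro v hv
    rw [Submodule.mem_span_range_iff_exists_fun] at hv
    obtain ⟨t, rfl⟩ := hv
    refine Submodule.sum_mem _ fun i _ => ?_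
    rw [← algebraMap_smul ℂ (t i)]
    exact W.smul_mem _ (W.smul_mem _ (b i).2)
  · intro v hv
    rw [Submodule.mem_span_range_iff_exists_fun] at hv
    obtain ⟨t, rfl⟩ := hv
    have hort : ∀ i j, i ≠ j → B (b i) (b j) = 0 := fun i j hij => hb hij
    have key : B (∑ i, t i • (c • (fun i => (b i : E))) i) (∑ i, t i • (c • (fun i => (b i : E))) i)
        = ∑ i, ((t i * t i : ℝ) : ℂ) * ((c i : ℂ) * c i * B (b i) (b i)) := by
      have e : ∀ i, t i • (c • (fun i => (b i : E))) i = ((t i : ℂ) * (c i : ℂ)) • (b i : E) := by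
        intro i
        rw [← algebraMap_smul ℂ (t i), mul_smul]; rfl
      simp_rw [e]
      rw [LinearMap.BilinForm.sum_left]
      refine Finset.sum_congr rfl fun i _ => ?_
      rw [LinearMap.BilinForm.sum_right, Finset.sum_eq_single i]
      · simp; ring
      · intro j _ hj
        simp [hort i j hj.symm]
      · simp
    rw [key, Complex.re_sum]
    refine Finset.sum_nonpos fun i _ => ?_
    rw [Complex.re_ofReal_mul]
    exact mul_nonpos_of_nonneg_of_nonpos (mul_self_nonneg _) (hc i)

/-- Every real q-convex function on an open set `Ω ⊆ ℂⁿ` (regarded as `ℝ²ⁿ` via the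
underlying real structure) is q-plurisubharmonic on `Ω`. -/
theorem qPlurisubharmonicOn_of_realQConvexOn {n q : ℕ} (hq : q < 2 * n)
    (Ω : Set (EuclideanSpace ℂ (Fin n))) (hΩ : IsOpen Ω)
    (u : EuclideanSpace ℂ (Fin n) → EReal)
    (hu : RealQConvexOn q u Ω) :
    QPlurisubharmonicOn q u Ω := by
  obtain ⟨htop, husc, hconv⟩ := hu
  refine ⟨htop, husc, ?_⟩
  intro P hP c r hr hcΩ h U hU hcU hh hbd z0 hz0
  by_contra hlt
  rw [not_le] at hlt
  have hcb : closure (ball c r) = closedBall c r := closure_ball c hr.ne'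
  rw [hcb] at hcΩ hcU
  have hhc : ContinuousOn h (closedBall c r) := by
    intro z hz
    obtain ⟨V, hV, hzV, -, F, hF, hFe⟩ := hh z (hcU hz)
    have h1 : ContinuousAt (fun y => (F y).re) z :=
      Complex.continuous_re.continuousAt.comp (hF.differentiableAt (hV.mem_nhds hzV)).continuousAt
    exact (h1.congr (Filter.eventually_of_mem (hV.mem_nhds hzV)
      fun y hy => (hFe y hy).symm)).continuousWithinAt
  have hz0Ω : z0 ∈ Ω := hcΩ hz0.1
  -- real value at `z0`
  obtain ⟨a0, ha0⟩ : ∃ a : ℝ, u z0 = a := by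
    refine ⟨(u z0).toReal, (EReal.coe_toReal (htop z0 hz0Ω) ?_).symm⟩
    exact (bot_le.trans_lt hlt).ne'
  rw [ha0, EReal.coe_lt_coe_iff] at hlt
  set δ := a0 - h z0 with hδ
  have hδ0 : 0 < δ := by linarith
  obtain ⟨ε, hε, hεr⟩ : ∃ ε > 0, ε * r^2 < δ :=
    ⟨δ / (2 * r^2), by positivity, by field_simp; linarith⟩
  set K := closedBall c r ∩ (P : Set (EuclideanSpace ℂ (Fin n))) with hK
  have hKc : IsCompact K := (isCompact_closedBall c r).inter_right P.closed_of_finiteDimensional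
  let g : EuclideanSpace ℂ (Fin n) → ℝ := fun z => ε * ‖z - c‖^2 - h z
  have hg : ContinuousOn g (closedBall c r) := by
    refine ContinuousOn.sub ?_ hhc
    fun_prop
  have hfusc : UpperSemicontinuousOn (fun z => u z + (g z : EReal)) K := by
    refine UpperSemicontinuousOn.add' (husc.mono fun z hz => hcΩ hz.1) ?_ ?_
    · exact ((continuous_coe_real_ereal.comp_continuousOn hg).mono
        inter_subset_left).upperSemicontinuousOn
    · intro z hz
      exact EReal.continuousAt_add (Or.inl (htop z (hcΩ hz.1))) (Or.inr (EReal.coe_ne_top _))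
  obtain ⟨p, hpK, hpmax⟩ := hfusc.exists_isMaxOn ⟨z0, hz0⟩ hKc
  have hpz0 := hpmax hz0
  simp only [mem_ofPred_eq] at hpz0
  rw [ha0] at hpz0
  obtain ⟨a, ha⟩ : ∃ a : ℝ, u p = a := by
    refine ⟨(u p).toReal, (EReal.coe_toReal (htop p (hcΩ hpK.1)) ?_).symm⟩
    intro hbot
    rw [hbot, EReal.bot_add, ← EReal.coe_add, le_bot_iff] at hpz0
    exact EReal.coe_ne_bot _ hpz0
  rw [ha, ← EReal.coe_add, ← EReal.coe_add, EReal.coe_le_coe_iff] at hpz0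
  have hmax : ∀ z ∈ K, u z ≤ ((a + g p - g z : ℝ) : EReal) := by
    intro z hz
    have h1 := hpmax hz
    simp only [mem_ofPred_eq] at h1
    rw [ha] at h1
    rw [EReal.coe_sub]
    rw [EReal.le_sub_iff_add_le (Or.inl (EReal.coe_ne_bot _)) (Or.inl (EReal.coe_ne_top _)),
      EReal.coe_add]
    exact h1
  have hpball : p ∈ ball c r := by
    rcases (mem_closedBall.1 hpK.1).lt_or_eq with h1 | h1
    · exact h1
    · exfalso
      have h2 := hbd p ⟨h1, hpK.2⟩
      rw [ha, EReal.coe_le_coe_iff] at h2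
      rw [dist_eq_norm] at h1
      have h3 : 0 ≤ ε * ‖z0 - c‖^2 := by positivity
      simp only [g, h1] at hpz0
      linarith
  -- local structure of `h` at `p`
  obtain ⟨V, hV, hpV, -, F, hF, hFe⟩ := hh p (hcU hpK.1)
  obtain ⟨A, B, hB, hT⟩ := hol_taylor_two hV hF hpV
  let B' : LinearMap.BilinForm ℂ (EuclideanSpace ℂ (Fin n)) :=
    LinearMap.mk₂ ℂ (fun v w => B v w) (by simp) (by simp) (by simp) (by simp)
  obtain ⟨L, hLd, hLW, hLneg⟩ := exists_real_neg_subspace B' hB P.direction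
  have hev := (hT (ε/2) (by linarith)).and ((hV.eventually_mem hpV).and
    (isOpen_ball.eventually_mem hpball))
  obtain ⟨ρ0, hρ0, hρ⟩ := Metric.eventually_nhds_iff_ball.1 hev
  set ρ := ρ0 / 2
  have hρpos : 0 < ρ := by positivity
  have hρsub : closedBall p ρ ⊆ ball p ρ0 := closedBall_subset_ball (half_lt_self hρ0)
  let lin : EuclideanSpace ℂ (Fin n) →ₗ[ℝ] ℝ :=
    Complex.reLm ∘ₗ ((A.toLinearMap - (2 * ε : ℂ) • (innerSL ℂ (p - c)).toLinearMap).restrictScalars ℝ)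
  have hlin : ∀ v, lin v = (A v).re - 2 * ε * (inner ℂ (p - c) v).re := by
    intro v
    simp [lin]
  let l : EuclideanSpace ℂ (Fin n) →ᵃ[ℝ] ℝ :=
    lin.toAffineMap + AffineMap.const ℝ _ (a - lin p - ε/2 * ρ^2)
  have hl : ∀ z, l z = a + lin (z - p) - ε/2 * ρ^2 := by
    intro z
    simp only [l, AffineMap.coe_add, Pi.add_apply, LinearMap.coe_toAffineMap, AffineMap.const_apply,
      map_sub]
    ring
  have hfin := hconv (AffineSubspace.mk' p L) (by
      rw [AffineSubspace.direction_mk', hLd, hP]) p ρ hρpos (by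
      rw [closure_ball p hρpos.ne']
      exact fun z hz => hcΩ (ball_subset_closedBall (hρ z (hρsub hz)).2.2)) l ?_ p
      ⟨mem_closedBall_self hρpos.le, AffineSubspace.self_mem_mk' p L⟩
  · rw [ha, hl, EReal.coe_le_coe_iff, sub_self, map_zero] at hfin
    have : 0 < ε/2 * ρ^2 := by positivity
    linarith
  · rintro z ⟨hzs, hzL⟩
    have hzL' : z - p ∈ L := by
      simpa [AffineSubspace.mem_mk'] using hzL
    obtain ⟨hz1, hzV, hzb⟩ := hρ z (hρsub (sphere_subset_closedBall hzs))
    have hzP : z ∈ P := by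
      have := AffineSubspace.vadd_mem_of_mem_direction (hLW _ hzL') hpK.2
      simpa using this
    have hzn : ‖z - p‖ = ρ := by rwa [mem_sphere_iff_norm] at hzs
    refine (hmax z ⟨ball_subset_closedBall hzb, hzP⟩).trans ?_
    rw [EReal.coe_le_coe_iff, hl, hlin]
    have hneg : (B (z - p) (z - p)).re ≤ 0 := hLneg _ hzL'
    have hre := (Complex.re_le_norm _).trans hz1
    have hnorm : ‖z - c‖^2 = ‖p - c‖^2 + 2 * (inner ℂ (p - c) (z - p)).re + ‖z - p‖^2 := by
      have := norm_add_sq (𝕜 := ℂ) (p - c) (z - p)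
      rw [show p - c + (z - p) = z - c by abel] at this
      exact this
    have hhalf : ((1/2 : ℂ) * B (z - p) (z - p)).re = 1/2 * (B (z - p) (z - p)).re := by
      simp
    rw [Complex.sub_re, Complex.sub_re, Complex.sub_re, hhalf, hzn] at hre
    rw [hzn] at hnorm
    simp only [g, hFe z hzV, hFe p hpV, hnorm]
    nlinarith
end
end
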